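/- arXiv:2411.04514 — 2 statements merged into one kernel-verified Lean document; each statement's English description precedes it below -/
import Mathlib

section
/- Let R be a commutative noetherian ring and (C, W) a hereditary cotorsion pair cogenerated by a class P of pure-injective R-modules of finite injective dimension. Then for any R-module M: (i) M embeds into some module of C if and only if E(M) ∈ C; (ii) M ∈ C if and only if M embeds into some module of C and Ω_{-1}(M) ∈ C_(1). -/
open CategoryTheory Opposite

noncomputable section

/-- Vanishing of the `n`-th Ext group of two `R`-modules. -/
def extV (R : Type) [Ring R] (M N : ModuleCat.{0} R) (n : ℕ) : Prop :=
  Subsingleton (((_root_.Ext ℤ (ModuleCat.{0} R) n).obj (op M)).obj N)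

/-- The left `Ext^1`-orthogonal class. -/
def leftPerp1 (R : Type) [Ring R] (𝒳 : Set (ModuleCat.{0} R)) : Set (ModuleCat.{0} R) :=
  {M | ∀ X ∈ 𝒳, extV R M X 1}

/-- The right `Ext^1`-orthogonal class. -/
def rightPerp1 (R : Type) [Ring R] (𝒳 : Set (ModuleCat.{0} R)) : Set (ModuleCat.{0} R) :=
  {N | ∀ X ∈ 𝒳, extV R X N 1}

/-- `(𝒞, 𝒲)` is a cotorsion pair. -/
def IsCotorsionPair (R : Type) [Ring R] (𝒞 𝒲 : Set (ModuleCat.{0} R)) : Prop :=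
  𝒞 = leftPerp1 R 𝒲 ∧ 𝒲 = rightPerp1 R 𝒞

/-- `(𝒞, 𝒲)` is a hereditary cotorsion pair. -/
def IsHereditaryCotorsionPair (R : Type) [Ring R] (𝒞 𝒲 : Set (ModuleCat.{0} R)) : Prop :=
  IsCotorsionPair R 𝒞 𝒲 ∧ ∀ X ∈ 𝒞, ∀ Y ∈ 𝒲, ∀ i : ℕ, 1 ≤ i → extV R X Y i

/-- The class `𝒞_(i) = {M ∣ Ext^j(M, W) = 0 for all j > i and all W ∈ 𝒲}`. -/
def cotShift (R : Type) [Ring R] (𝒲 : Set (ModuleCat.{0} R)) (i : ℕ) : Set (ModuleCat.{0} R) :=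
  {M | ∀ Y ∈ 𝒲, ∀ j : ℕ, i < j → extV R M Y j}

/-- `f : A →ₗ[R] B` is a pure monomorphism. -/
def IsPureMono (R : Type) [CommRing R] {A B : Type} [AddCommGroup A] [Module R A]
    [AddCommGroup B] [Module R B] (f : A →ₗ[R] B) : Prop :=
  Function.Injective f ∧
    ∀ (Q : Type) [AddCommGroup Q] [Module R Q], Function.Injective (LinearMap.lTensor Q f)

/-- An `R`-module `N` is pure-injective if it is injective with respect to
pure monomorphisms. -/
def PureInjective (R : Type) [CommRing R] (N : Type) [AddCommGroup N] [Module R N] : Prop :=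
  ∀ (A B : Type) [AddCommGroup A] [Module R A] [AddCommGroup B] [Module R B]
    (f : A →ₗ[R] B), IsPureMono R f → ∀ g : A →ₗ[R] N, ∃ h : B →ₗ[R] N, h.comp f = g

/-- `N` has injective dimension at most `n`: all Ext-groups above degree `n` vanish. -/
def injDimLE (R : Type) [Ring R] (N : ModuleCat.{0} R) (n : ℕ) : Prop :=
  ∀ M : ModuleCat.{0} R, ∀ j : ℕ, n < j → extV R M N j

/-- The class of pure-injective `R`-modules of finite injective dimension. -/
def PIFinInj (R : Type) [CommRing R] : Set (ModuleCat.{0} R) :=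
  {N | PureInjective R ↥N ∧ ∃ n : ℕ, injDimLE R N n}

/-- The depth of a module over a commutative noetherian local ring, as the infimum of
the degrees in which `Ext(k, M)` does not vanish (`⊤` if all vanish). -/
def rdepth (A : Type) [CommRing A] [IsLocalRing A] (M : Type) [AddCommGroup M]
    [Module A M] : ℕ∞ :=
  sInf {n : ℕ∞ | ∃ i : ℕ, n = (i : ℕ∞) ∧
    ¬ extV A (ModuleCat.of A (IsLocalRing.ResidueField A)) (ModuleCat.of A M) i}

/-- The residue field `k(p)` of `R_p`, as an `R`-module. -/
abbrev resField (R : Type) [CommRing R] (p : PrimeSpectrum R) : Type :=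
  LocalizedModule p.asIdeal.primeCompl (R ⧸ p.asIdeal)

/-- `depth(R_p)`. -/
def ringDepthAt (R : Type) [CommRing R] (p : PrimeSpectrum R) : ℕ∞ :=
  rdepth (Localization.AtPrime p.asIdeal) (Localization.AtPrime p.asIdeal)

/-- `depth_{R_p}(M_p)`. -/
def depthAt (R : Type) [CommRing R] (p : PrimeSpectrum R) (M : Type) [AddCommGroup M]
    [Module R M] : ℕ∞ :=
  rdepth (Localization.AtPrime p.asIdeal) (LocalizedModule p.asIdeal.primeCompl M)

/-- `f : M →ₗ[R] E` exhibits `E` as an injective envelope of `M`: `E` is injective and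
`f` is an essential monomorphism. -/
def IsInjectiveEnvelope (R : Type) [Ring R] {M E : Type} [AddCommGroup M] [Module R M]
    [AddCommGroup E] [Module R E] (f : M →ₗ[R] E) : Prop :=
  Module.Injective R E ∧ Function.Injective f ∧
    ∀ K : Submodule R E, K ≠ ⊥ → K ⊓ LinearMap.range f ≠ ⊥

theorem extV_iff (R : Type) [Ring R] (M N : ModuleCat.{0} R) (n : ℕ) :
    extV R M N (n+1) ↔ Subsingleton (Abelian.Ext.{0} M N (n+1)) := by
  let P := projectiveResolution M
  have key : extV R M N (n+1) ↔ ∀ f : P.complex.X (n+1) ⟶ N, P.complex.d (n+2) (n+1) ≫ f = 0 →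
      ∃ g : P.complex.X n ⟶ N, P.complex.d (n+1) n ≫ g = f := by
    unfold extV
    rw [(P.isoExt (R := ℤ) (n+1) N).toLinearEquiv.toEquiv.subsingleton_congr,
      ← ModuleCat.isZero_iff_subsingleton,
      ← HomologicalComplex.exactAt_iff_isZero_homology,
      HomologicalComplex.exactAt_iff' _ n (n+1) (n+2) (by simp) (by simp),
      ShortComplex.moduleCat_exact_iff]
    rfl
  rw [key]
  constructor
  · intro h
    refine subsingleton_of_forall_eq 0 fun x => ?_
    obtain ⟨f, hf, rfl⟩ := P.extMk_surjective x (n+2) rfl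
    rw [P.extMk_eq_zero_iff f (n+2) rfl hf n rfl]
    exact h f hf
  · intro h f hf
    rw [← P.extMk_eq_zero_iff f (n+2) rfl hf n rfl]
    exact Subsingleton.elim _ _

/-- Ext vanishing -/
def XV (R : Type) [Ring R] (M N : Type) [AddCommGroup M] [Module R M] [AddCommGroup N] [Module R N]
    (n : ℕ) : Prop := Subsingleton (Abelian.Ext.{0} (ModuleCat.of R M) (ModuleCat.of R N) n)

section LES
variable {R : Type} [Ring R] {A B C N : Type} [AddCommGroup A] [Module R A] [AddCommGroup B]
  [Module R B] [AddCommGroup C] [Module R C] [AddCommGroup N] [Module R N]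

theorem XV.retract (i : B →ₗ[R] A) (r : A →ₗ[R] B) (h : r ∘ₗ i = LinearMap.id) {n : ℕ}
    (hA : XV R A N n) : XV R B N n := by
  unfold XV at *
  refine subsingleton_of_forall_eq 0 fun x => ?_
  have h1 : ModuleCat.ofHom i ≫ ModuleCat.ofHom r = 𝟙 _ := by
    rw [← ModuleCat.ofHom_comp, h]; rfl
  have : x = (Abelian.Ext.mk₀ (ModuleCat.ofHom i)).comp
      ((Abelian.Ext.mk₀ (ModuleCat.ofHom r)).comp x (zero_add n)) (zero_add n) := by
    rw [Abelian.Ext.mk₀_comp_mk₀_assoc, h1]; simp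
  rw [this, Subsingleton.elim ((Abelian.Ext.mk₀ (ModuleCat.ofHom r)).comp x (zero_add n)) 0]
  simp

theorem XV.congr (e : A ≃ₗ[R] B) {n : ℕ} (h : XV R A N n) : XV R B N n :=
  XV.retract e.symm.toLinearMap e.toLinearMap (by ext; simp) h

variable (f : A →ₗ[R] B) (g : B →ₗ[R] C)

/-- the short complex -/
abbrev scx (ex : Function.Exact f g) : ShortComplex (ModuleCat.{0} R) :=
  ShortComplex.mk (ModuleCat.ofHom f) (ModuleCat.ofHom g)
    (by rw [← ModuleCat.ofHom_comp, ex.linearMap_comp_eq_zero]; rfl)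

theorem scx_se (hf : Function.Injective f) (hg : Function.Surjective g) (ex : Function.Exact f g) :
    (scx f g ex).ShortExact := 
  { exact := (ShortComplex.ShortExact.moduleCat_exact_iff_function_exact _).mpr ex
    mono_f := (ModuleCat.mono_iff_injective _).mpr hf
    epi_g := (ModuleCat.epi_iff_surjective _).mpr hg }

variable {f g}

theorem XV.one (hf : Function.Injective f) (hg : Function.Surjective g) (ex : Function.Exact f g)
    {n : ℕ} (hB : XV R B N n) (hC : XV R C N (n+1)) : XV R A N n := by
  unfold XV at *
  refine subsingleton_of_forall_eq 0 fun x => ?_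
  obtain ⟨y, rfl⟩ := Abelian.Ext.contravariant_sequence_exact₁ (scx_se f g hf hg ex) _ x
    (add_comm 1 n) (Subsingleton.elim _ _)
  rw [Subsingleton.elim y 0]; simp

theorem XV.two (hf : Function.Injective f) (hg : Function.Surjective g) (ex : Function.Exact f g)
    {n : ℕ} (hA : XV R A N n) (hC : XV R C N n) : XV R B N n := by
  unfold XV at *
  refine subsingleton_of_forall_eq 0 fun x => ?_
  obtain ⟨y, rfl⟩ := Abelian.Ext.contravariant_sequence_exact₂ (scx_se f g hf hg ex) _ x
    (Subsingleton.elim _ _)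
  rw [Subsingleton.elim y 0]; simp

theorem XV.three (hf : Function.Injective f) (hg : Function.Surjective g) (ex : Function.Exact f g)
    {n : ℕ} (hA : XV R A N n) (hB : XV R B N (n+1)) : XV R C N (n+1) := by
  unfold XV at *
  refine subsingleton_of_forall_eq 0 fun x => ?_
  obtain ⟨y, rfl⟩ := Abelian.Ext.contravariant_sequence_exact₃ (scx_se f g hf hg ex) _ x
    (Subsingleton.elim _ _) (add_comm 1 n)
  rw [Subsingleton.elim y 0]; simp

theorem XV.of_ext (hf : Function.Injective f) (hg : Function.Surjective g) (ex : Function.Exact f g)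
    (h : ∀ u : A →ₗ[R] N, ∃ v : B →ₗ[R] N, v ∘ₗ f = u) (hB : XV R B N 1) : XV R C N 1 := by
  unfold XV at *
  refine subsingleton_of_forall_eq 0 fun x => ?_
  obtain ⟨y, rfl⟩ := Abelian.Ext.contravariant_sequence_exact₃ (scx_se f g hf hg ex) _ x
    (Subsingleton.elim _ _) (n₀ := 0) rfl
  obtain ⟨u, rfl⟩ := Abelian.Ext.homEquiv₀.symm.surjective y
  obtain ⟨v, hv⟩ := h u.hom
  have : u = (scx f g ex).f ≫ ModuleCat.ofHom v := by
    ext1; exact hv.symm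
  rw [this]
  simp only [Abelian.Ext.homEquiv₀_symm_apply]
  rw [← Abelian.Ext.mk₀_comp_mk₀]
  exact ShortComplex.ShortExact.extClass_comp_assoc (scx_se f g hf hg ex) _

theorem XV.to_ext (hf : Function.Injective f) (hg : Function.Surjective g) (ex : Function.Exact f g)
    (hC : XV R C N 1) (u : A →ₗ[R] N) : ∃ v : B →ₗ[R] N, v ∘ₗ f = u := by
  unfold XV at *
  obtain ⟨y, hy⟩ := Abelian.Ext.contravariant_sequence_exact₁ (scx_se f g hf hg ex) _
    (Abelian.Ext.mk₀ (ModuleCat.ofHom u)) (n₁ := 1) rfl (Subsingleton.elim _ _)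
  obtain ⟨v, rfl⟩ := Abelian.Ext.homEquiv₀.symm.surjective y
  refine ⟨v.hom, ?_⟩
  simp only [Abelian.Ext.homEquiv₀_symm_apply, Abelian.Ext.mk₀_comp_mk₀] at hy
  have := Abelian.Ext.homEquiv₀.symm.injective hy
  simpa using congrArg ModuleCat.Hom.hom this

theorem XV.proj [Module.Projective R A] (n : ℕ) : XV R A N (n+1) := by
  have : Projective (ModuleCat.of R A) := (IsProjective.iff_projective A).mp inferInstance
  exact Abelian.Ext.subsingleton_of_projective _ _ n

end LES
section Sums
variable {R : Type} [CommRing R]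

open DirectSum in
theorem dsum_ses {ι : Type} (K F A : ι → Type) [∀ i, AddCommGroup (A i)] [∀ i, Module R (A i)]
    [∀ i, AddCommGroup (K i)] [∀ i, Module R (K i)] [∀ i, AddCommGroup (F i)] [∀ i, Module R (F i)]
    (f : ∀ i, K i →ₗ[R] F i) (g : ∀ i, F i →ₗ[R] A i) (hf : ∀ i, Function.Injective (f i))
    (hg : ∀ i, Function.Surjective (g i)) (ex : ∀ i, Function.Exact (f i) (g i)) :
    Function.Injective (DirectSum.lmap f) ∧ Function.Surjective (DirectSum.lmap g) ∧
    Function.Exact (DirectSum.lmap f) (DirectSum.lmap g) := by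
  classical
  refine ⟨(DirectSum.lmap_injective _).2 hf, (DirectSum.lmap_surjective _).2 hg, ?_⟩
  rw [LinearMap.exact_iff, DirectSum.ker_lmap, DirectSum.range_lmap]
  simp only [fun i => (ex i).linearMap_ker_eq]

open DirectSum in
theorem XV.dsum0 {N : Type} [AddCommGroup N] [Module R N] {ι : Type}
    (K F A : ι → Type) [∀ i, AddCommGroup (A i)] [∀ i, Module R (A i)]
    [∀ i, AddCommGroup (K i)] [∀ i, Module R (K i)] [∀ i, AddCommGroup (F i)] [∀ i, Module R (F i)]
    [∀ i, Module.Projective R (F i)]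
    (f : ∀ i, K i →ₗ[R] F i) (g : ∀ i, F i →ₗ[R] A i) (hf : ∀ i, Function.Injective (f i))
    (hg : ∀ i, Function.Surjective (g i)) (ex : ∀ i, Function.Exact (f i) (g i))
    (h : ∀ i, XV R (A i) N 1) : XV R (⨁ i, A i) N 1 := by
  classical
  obtain ⟨h1, h2, h3⟩ := dsum_ses K F A f g hf hg ex
  refine XV.of_ext h1 h2 h3 ?_ (XV.proj 0)
  intro u
  have := fun i => XV.to_ext (hf i) (hg i) (ex i) (h i) (u ∘ₗ DirectSum.lof R ι K i)
  choose v hv using this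
  refine ⟨DirectSum.toModule R ι N v, ?_⟩
  refine DirectSum.linearMap_ext R fun i => ?_
  rw [← hv i]
  ext x
  simp

open DirectSum in
theorem XV.dsum1 {N : Type} [AddCommGroup N] [Module R N] {ι : Type}
    (K F A : ι → Type) [∀ i, AddCommGroup (A i)] [∀ i, Module R (A i)]
    [∀ i, AddCommGroup (K i)] [∀ i, Module R (K i)] [∀ i, AddCommGroup (F i)] [∀ i, Module R (F i)]
    [∀ i, Module.Projective R (F i)]
    (f : ∀ i, K i →ₗ[R] F i) (g : ∀ i, F i →ₗ[R] A i) (hf : ∀ i, Function.Injective (f i))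
    (hg : ∀ i, Function.Surjective (g i)) (ex : ∀ i, Function.Exact (f i) (g i)) (n : ℕ)
    (h : XV R (⨁ i, K i) N (n+1)) : XV R (⨁ i, A i) N (n+1+1) := by
  obtain ⟨h1, h2, h3⟩ := dsum_ses K F A f g hf hg ex
  exact XV.three h1 h2 h3 h (XV.proj _)

open DirectSum in
theorem XV.dsum {N : Type} [AddCommGroup N] [Module R N] {ι : Type} (n : ℕ) :
    ∀ (A : ι → Type) [∀ i, AddCommGroup (A i)] [∀ i, Module R (A i)]
    (_ : ∀ i, XV R (A i) N (n+1)), XV R (⨁ i, A i) N (n+1) := by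
  classical
  induction n with
  | zero =>
    intro A _ _ h
    let π : ∀ i, (A i →₀ R) →ₗ[R] A i := fun i => Finsupp.linearCombination R id
    have hπ : ∀ i, Function.Surjective (π i) := fun i => Finsupp.linearCombination_id_surjective R (A i)
    exact XV.dsum0 (fun i => LinearMap.ker (π i)) _ A (fun i => (LinearMap.ker (π i)).subtype) π
      (fun i => Subtype.val_injective) hπ (fun i => LinearMap.exact_subtype_ker_map _) h
  | succ n ih =>
    intro A _ _ h
    let π : ∀ i, (A i →₀ R) →ₗ[R] A i := fun i => Finsupp.linearCombination R id
    have hπ : ∀ i, Function.Surjective (π i) := fun i => Finsupp.linearCombination_id_surjective R (A i)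
    refine XV.dsum1 (fun i => LinearMap.ker (π i)) _ A (fun i => (LinearMap.ker (π i)).subtype) π
      (fun i => Subtype.val_injective) hπ (fun i => LinearMap.exact_subtype_ker_map _) n
      (ih _ fun i => ?_)
    exact XV.one (f := (LinearMap.ker (π i)).subtype) (g := π i)
      Subtype.val_injective (hπ i) (LinearMap.exact_subtype_ker_map _) (XV.proj _) (h i)

theorem XV.finsupp {N A : Type} [AddCommGroup N] [Module R N] [AddCommGroup A] [Module R A]
    (ι : Type) (n : ℕ) (h : XV R A N (n+1)) : XV R (ι →₀ A) N (n+1) := by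
  classical
  exact XV.congr (finsuppLEquivDirectSum R A ι).symm (XV.dsum n (fun _ => A) fun _ => h)

theorem XV.pure {A B N : Type} [AddCommGroup A] [Module R A] [AddCommGroup B] [Module R B]
    [AddCommGroup N] [Module R N] (π : B →ₗ[R] A) (hπ : Function.Surjective π)
    (hL : ∀ z, π z = 0 → ∃ u : B →ₗ[R] B, π ∘ₗ u = π ∧ u z = 0)
    (hN : PureInjective R N) (hB : XV R B N 1) : XV R A N 1 := by
  classical
  have hF : ∀ F : Finset (LinearMap.ker π), ∃ u : B →ₗ[R] B, π ∘ₗ u = π ∧ ∀ z ∈ F, u z = 0 := by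
    intro F
    induction F using Finset.induction_on with
    | empty => exact ⟨LinearMap.id, rfl, by simp⟩
    | insert a s ha ih =>
      obtain ⟨u, hu, hu'⟩ := ih
      obtain ⟨w, hw, hw'⟩ := hL (u a) (by
        have := LinearMap.congr_fun hu a
        rw [LinearMap.comp_apply] at this
        rw [this]; exact a.2)
      refine ⟨w ∘ₗ u, by rw [← LinearMap.comp_assoc, hw, hu], ?_⟩
      intro z hz
      rw [Finset.mem_insert] at hz
      rcases hz with rfl | hz
      · exact hw'
      · simp [hu' z hz]
  refine XV.of_ext (f := (LinearMap.ker π).subtype) (g := π)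
      Subtype.val_injective hπ (LinearMap.exact_subtype_ker_map _) ?_ hB
  apply hN
  refine ⟨Subtype.val_injective, ?_⟩
  intro Q _ _
  rw [injective_iff_map_eq_zero]
  intro t ht
  obtain ⟨S, hS⟩ := TensorProduct.exists_finset t
  obtain ⟨u, hu, hu'⟩ := hF (S.image Prod.snd)
  have hr : ∀ b, ((LinearMap.id : B →ₗ[R] B) - u) b ∈ LinearMap.ker π := by
    intro b
    have := LinearMap.congr_fun hu b
    simp only [LinearMap.comp_apply] at this
    simp [this]
  let r : B →ₗ[R] LinearMap.ker π := LinearMap.codRestrict _ ((LinearMap.id : B →ₗ[R] B) - u) hr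
  have h1 : LinearMap.lTensor Q r (LinearMap.lTensor Q (LinearMap.ker π).subtype t) = t := by
    rw [hS, map_sum, map_sum]
    refine Finset.sum_congr rfl fun x hx => ?_
    simp only [LinearMap.lTensor_tmul]
    congr 1
    apply Subtype.ext
    simp [r, hu' x.2 (Finset.mem_image_of_mem _ hx)]
  rw [← h1, ht, map_zero]

open DirectSum in
theorem XV.union {A N : Type} [AddCommGroup A] [Module R A]
    [AddCommGroup N] [Module R N] {ι : Type} [Nonempty ι] (S : ι → Submodule R A)
    (hS : Directed (· ≤ ·) S)
    (hN : PureInjective R N) (h : ∀ i, XV R (S i) N 1) : XV R (⨆ i, S i : Submodule R A) N 1 := by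
  classical
  let π : (⨁ i, S i) →ₗ[R] (⨆ i, S i : Submodule R A) :=
    DirectSum.toModule R ι _ fun i => Submodule.inclusion (le_iSup S i)
  refine XV.pure π ?_ ?_ hN (XV.dsum 0 _ h)
  · rintro ⟨x, hx⟩
    obtain ⟨i, hi⟩ := (Submodule.mem_iSup_of_directed S hS).1 hx
    refine ⟨DirectSum.lof R ι (fun i => S i) i ⟨x, hi⟩, ?_⟩
    simp [π]
    rfl
  · intro z hz
    obtain ⟨j, hj⟩ := hS.finset_le (DFinsupp.support z)
    let u : (⨁ i, S i) →ₗ[R] (⨁ i, S i) := DirectSum.toModule R ι _ fun i =>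
      if h : S i ≤ S j then DirectSum.lof R ι (fun i => S i) j ∘ₗ Submodule.inclusion h
      else DirectSum.lof R ι (fun i => S i) i
    have hu : ∀ i (x : S i), (S i ≤ S j) → ∃ y : S j, (y : A) = x ∧
        u (DirectSum.lof R ι (fun i => S i) i x) = DirectSum.lof R ι (fun i => S i) j y := by
      intro i x hx
      refine ⟨Submodule.inclusion hx x, rfl, ?_⟩
      simp [u, hx]
    have hπu : π ∘ₗ u = π := by
      refine DirectSum.linearMap_ext R fun i => ?_
      ext x
      by_cases hx : S i ≤ S j
      · simp [u, π, hx]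
      · simp [u, π, hx]
    refine ⟨u, hπu, ?_⟩
    have hz' : z = ∑ i ∈ DFinsupp.support z, DirectSum.lof R ι (fun i => S i) i (z i) :=
      (DirectSum.sum_support_of z).symm
    have : ∃ y : S j, u z = DirectSum.lof R ι (fun i => S i) j y := by
      have : ∀ i, ∃ y : S j, i ∈ DFinsupp.support z → u (DirectSum.lof R ι (fun i => S i) i (z i))
          = DirectSum.lof R ι (fun i => S i) j y := by
        intro i
        by_cases hi : i ∈ DFinsupp.support z
        · obtain ⟨y, -, hy⟩ := hu i (z i) (hj i hi)
          exact ⟨y, fun _ => hy⟩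
        · exact ⟨0, fun h => absurd h hi⟩
      choose y hy using this
      refine ⟨∑ i ∈ DFinsupp.support z, y i, ?_⟩
      rw [map_sum]
      conv_lhs => rw [hz']
      rw [map_sum]
      exact Finset.sum_congr rfl fun i hi => hy i hi
    obtain ⟨y, hy⟩ := this
    have h2 := LinearMap.congr_fun hπu z
    rw [LinearMap.comp_apply, hy, hz] at h2
    have : y = 0 := by
      have := congrArg Subtype.val h2
      simpa [π] using this
    rw [hy, this, map_zero]

theorem XV.loc {A N : Type} [AddCommGroup A] [Module R A]
    [AddCommGroup N] [Module R N] (S : Submonoid R)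
    (hN : PureInjective R N) (h : XV R A N 1) : XV R (LocalizedModule S A) N 1 := by
  classical
  let f := LocalizedModule.mkLinearMap S A
  let m : S → A →ₗ[R] LocalizedModule S A := fun s =>
    { toFun := fun a => IsLocalizedModule.mk' f a s
      map_add' := fun a b => IsLocalizedModule.mk'_add f a b s
      map_smul' := fun r a => IsLocalizedModule.mk'_smul f r a s }
  have hm : ∀ s a, m s a = IsLocalizedModule.mk' f a s := fun _ _ => rfl
  let π : (S →₀ A) →ₗ[R] LocalizedModule S A := Finsupp.lsum R m
  have hπ : ∀ s a, π (Finsupp.single s a) = m s a := by intro s a; simp [π]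
  refine XV.pure π ?_ ?_ hN (XV.finsupp S 0 h)
  · intro x
    obtain ⟨⟨a, s⟩, rfl⟩ := IsLocalizedModule.mk'_surjective S f x
    exact ⟨Finsupp.single s a, hπ s a⟩
  · intro z hz
    let t0 : S := ∏ s ∈ z.support, s
    have hd : ∀ s ∈ z.support, ∃ b, t0 = b * s := fun s hs => by
      obtain ⟨b, hb⟩ := Finset.dvd_prod_of_mem (fun s : S => s) hs
      exact ⟨b, by rw [mul_comm]; exact hb⟩
    let u : (S →₀ A) →ₗ[R] (S →₀ A) := Finsupp.lsum R fun s =>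
      if h : ∃ b, t0 = b * s then Finsupp.lsingle t0 ∘ₗ LinearMap.lsmul R A ((h.choose : S) : R)
      else Finsupp.lsingle s
    have hu : ∀ s a, (∃ b, t0 = b * s) → ∃ b, t0 = b * s ∧
        u (Finsupp.single s a) = Finsupp.single t0 (b • a) := by
      intro s a h
      refine ⟨h.choose, h.choose_spec, ?_⟩
      simp only [u, Finsupp.lsum_single, dif_pos h]
      rfl
    have hπu : π ∘ₗ u = π := by
      refine Finsupp.lhom_ext fun s a => ?_
      rw [LinearMap.comp_apply]
      by_cases h : ∃ b, t0 = b * s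
      · obtain ⟨b, hb, hb'⟩ := hu s a h
        rw [hb', hπ, hπ, hm, hm, hb, IsLocalizedModule.mk'_cancel_left]
      · simp only [u, Finsupp.lsum_single, dif_neg h]
        rfl
    have : ∃ y : A, u z = Finsupp.single t0 y := by
      have : ∀ s, ∃ y : A, s ∈ z.support → u (Finsupp.single s (z s)) = Finsupp.single t0 y := by
        intro s
        by_cases hs : s ∈ z.support
        · obtain ⟨y, -, hy⟩ := hu s (z s) (hd s hs)
          exact ⟨_, fun _ => hy⟩
        · exact ⟨0, fun h => absurd h hs⟩
      choose y hy using this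
      refine ⟨∑ s ∈ z.support, y s, ?_⟩
      conv_lhs => rw [← Finsupp.sum_single z]
      rw [Finsupp.sum, map_sum, Finsupp.single_finsetSum]
      exact Finset.sum_congr rfl fun i hi => hy i hi
    obtain ⟨y, hy⟩ := this
    have h2 := LinearMap.congr_fun hπu z
    rw [LinearMap.comp_apply, hy, hz, hπ, hm, IsLocalizedModule.mk'_eq_zero'] at h2
    obtain ⟨t, ht⟩ := h2
    let w : (S →₀ A) →ₗ[R] (S →₀ A) := Finsupp.lsum R fun s =>
      Finsupp.lsingle (t * s) ∘ₗ LinearMap.lsmul R A (t : R)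
    have hw : ∀ s a, w (Finsupp.single s a) = Finsupp.single (t * s) (t • a) := by
      intro s a
      simp only [w, Finsupp.lsum_single]
      rfl
    refine ⟨w ∘ₗ u, ?_, ?_⟩
    · rw [← LinearMap.comp_assoc]
      have : π ∘ₗ w = π := by
        refine Finsupp.lhom_ext fun s a => ?_
        rw [LinearMap.comp_apply, hw, hπ, hπ, hm, hm, IsLocalizedModule.mk'_cancel_left]
      rw [this, hπu]
    · rw [LinearMap.comp_apply, hy, hw, ht, Finsupp.single_zero]

end Sums
section AB
variable {R : Type} [CommRing R] (p : Ideal R)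

/-- elements outside `p` act bijectively -/
def LocAt (V : Type) [AddCommGroup V] [Module R V] : Prop :=
  ∀ s, s ∉ p → Function.Bijective (fun v : V => s • v)

/-- `p` acts as zero -/
def Kill (V : Type) [AddCommGroup V] [Module R V] : Prop := ∀ a ∈ p, ∀ v : V, a • v = 0

/-- Ext vanishing above `d` -/
def Gd (R : Type) [CommRing R] (N : Type) [AddCommGroup N] [Module R N] (d : ℕ)
    (A : Type) [AddCommGroup A] [Module R A] : Prop :=
  ∀ i, d < i → XV R A N i

theorem vs_equiv [p.IsPrime] (V : Type) [AddCommGroup V] [Module R V] (h1 : LocAt p V)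
    (h2 : Kill p V) : ∃ ι : Type, Nonempty (V ≃ₗ[R] (ι →₀ p.ResidueField)) := by
  let S := p.primeCompl
  let W := LocalizedModule S V
  let A := Localization.AtPrime p
  let e : V ≃ₗ[R] W := LinearEquiv.ofBijective (LocalizedModule.mkLinearMap S V) (by
    constructor
    · rw [injective_iff_map_eq_zero]
      intro v hv
      obtain ⟨s, hs⟩ := (IsLocalizedModule.eq_zero_iff S (LocalizedModule.mkLinearMap S V)).1 hv
      exact (h1 s s.2).1 (by change (s : R) • v = (s : R) • (0 : V); rw [smul_zero]; exact hs)
    · intro w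
      induction w using LocalizedModule.induction_on with
      | h v s =>
        obtain ⟨v', hv⟩ := (h1 s s.2).2 v
        refine ⟨v', ?_⟩
        dsimp only at hv
        rw [← hv]
        exact (LocalizedModule.mk_cancel s v').symm)
  have htor : Module.IsTorsionBySet A W (IsLocalRing.maximalIdeal A : Set A) := by
    rintro w ⟨a, ha⟩
    obtain ⟨⟨r, s⟩, rfl⟩ := IsLocalization.mk'_surjective p.primeCompl a
    have hr : r ∈ p := (IsLocalization.AtPrime.mk'_mem_maximal_iff A p r s).1 ha
    have hw : (algebraMap R A r) • w = 0 := by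
      rw [algebraMap_smul]
      obtain ⟨v, rfl⟩ := e.surjective w
      rw [← map_smul, h2 r hr, map_zero]
    have hu : IsUnit (algebraMap R A s) := IsLocalization.map_units A s
    change IsLocalization.mk' A r s • w = 0
    rw [← hu.smul_eq_zero, smul_smul, IsLocalization.mk'_spec', hw]
  let _ : Module p.ResidueField W := htor.module
  have hsm : ∀ (r : R) (w : W), (algebraMap R p.ResidueField r) • w = r • w := by
    intro r w
    have : algebraMap R p.ResidueField r = Ideal.Quotient.mk _ (algebraMap R A r) := rfl
    rw [this]
    refine (htor.mk_smul _ _).trans ?_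
    exact algebraMap_smul A r w
  have b := Module.Free.chooseBasis p.ResidueField W
  refine ⟨Module.Free.ChooseBasisIndex p.ResidueField W, ⟨e.trans
    { b.repr with map_smul' := ?_ }⟩⟩
  intro r w
  change b.repr (r • w) = r • b.repr w
  rw [← hsm, map_smul, algebraMap_smul]

variable {p}

theorem LocAt.range {V W : Type} [AddCommGroup V] [Module R V] [AddCommGroup W] [Module R W]
    (f : V →ₗ[R] W) (hV : LocAt p V) (hW : LocAt p W) : LocAt p (LinearMap.range f) := by
  intro s hs
  constructor
  · intro x y hxy
    exact Subtype.ext ((hW s hs).1 (congrArg Subtype.val hxy))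
  · rintro ⟨_, v, rfl⟩
    obtain ⟨v', rfl⟩ := (hV s hs).2 v
    exact ⟨⟨f v', v', rfl⟩, Subtype.ext (map_smul f s v').symm⟩

theorem LocAt.quot {V : Type} [AddCommGroup V] [Module R V] (I : Submodule R V)
    (hV : LocAt p V) (hI : LocAt p I) : LocAt p (V ⧸ I) := by
  intro s hs
  constructor
  · have : Function.Injective (LinearMap.lsmul R (V ⧸ I) s) := by
      rw [injective_iff_map_eq_zero]
      intro x hx
      obtain ⟨v, rfl⟩ := I.mkQ_surjective x
      have h : s • v ∈ I := by
        rw [← Submodule.Quotient.mk_eq_zero]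
        simpa using hx
      obtain ⟨⟨w, hw⟩, hw'⟩ := (hI s hs).2 ⟨s • v, h⟩
      have : w = v := (hV s hs).1 (congrArg Subtype.val hw')
      rw [← this]
      simpa using hw
    exact this
  · intro x
    obtain ⟨v, rfl⟩ := I.mkQ_surjective x
    obtain ⟨w, rfl⟩ := (hV s hs).2 v
    exact ⟨I.mkQ w, (map_smul I.mkQ s w).symm⟩

theorem LocAt.hom (K : Type) {V : Type} [AddCommGroup V] [Module R V] [AddCommGroup K] [Module R K]
    (hV : LocAt p V) : LocAt p (K →ₗ[R] V) := by
  intro s hs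
  constructor
  · intro f g hfg
    ext x
    exact (hV s hs).1 (LinearMap.congr_fun hfg x)
  · intro f
    let e := LinearEquiv.ofBijective (LinearMap.lsmul R V s) (hV s hs)
    refine ⟨e.symm.toLinearMap ∘ₗ f, ?_⟩
    ext x
    exact e.apply_symm_apply (f x)

/-- multiplication by elements of `p` factors through finite free modules -/
def PK (p : Ideal R) (K : Type) [AddCommGroup K] [Module R K] : Prop :=
  ∀ a ∈ p, ∃ (m : ℕ) (α : K →ₗ[R] (Fin m → R)) (β : (Fin m → R) →ₗ[R] K),
    ∀ k, β (α k) = a • k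

theorem PK.syz {K : Type} [AddCommGroup K] [Module R K] (hK : PK p K) {m : ℕ}
    (π : (Fin m → R) →ₗ[R] K) (hπ : Function.Surjective π) {a : R} (ha : a ∈ p) :
    ∃ β : (Fin m → R) →ₗ[R] LinearMap.ker π, ∀ k : LinearMap.ker π, β k = a • k := by
  obtain ⟨m', α, β, h⟩ := hK a ha
  obtain ⟨β', hβ'⟩ := Module.projective_lifting_property π β hπ
  refine ⟨LinearMap.codRestrict _ (a • LinearMap.id - β' ∘ₗ α ∘ₗ π) ?_, ?_⟩
  · intro x
    have := LinearMap.congr_fun hβ' (α (π x))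
    rw [LinearMap.comp_apply, h] at this
    simp [this]
  · intro k
    apply Subtype.ext
    simp

theorem Gd.quotVS [p.IsPrime] {N V : Type} [AddCommGroup N] [Module R N]
    [AddCommGroup V] [Module R V] {d : ℕ} (hk : Gd R N d p.ResidueField) (h1 : LocAt p V)
    (h2 : Kill p V) : Gd R N d V := by
  obtain ⟨ι, ⟨e⟩⟩ := vs_equiv p V h1 h2
  intro i hi
  obtain ⟨j, rfl⟩ : ∃ j, i = j + 1 := ⟨i - 1, by omega⟩
  exact XV.congr e.symm (XV.finsupp ι j (hk _ hi))

theorem AB_step [IsNoetherianRing R] [p.IsPrime] {N X : Type} [AddCommGroup N] [Module R N]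
    [AddCommGroup X] [Module R X] {n d : ℕ}
    (hn : ∀ (A : Type) [AddCommGroup A] [Module R A], Gd R N n A)
    (hX : Gd R N 0 X) (hXl : LocAt p X) (hd : 0 < d) (hk : Gd R N d p.ResidueField) (s : ℕ) :
    ∀ (K : Type) [AddCommGroup K] [Module R K] [Module.Finite R K] (_ : PK p K),
      Gd R N (max (n - s) (d - 1)) (K →ₗ[R] X) := by
  induction s with
  | zero =>
    intro K _ _ _ _ i hi
    exact hn _ i (by omega)
  | succ s ih =>
    intro K _ _ _ hK
    obtain ⟨m, π, hπ⟩ := Module.Finite.exists_fin' R K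
    have hK' : PK p (LinearMap.ker π) := by
      intro a ha
      obtain ⟨β, hβ⟩ := hK.syz π hπ ha
      exact ⟨m, (LinearMap.ker π).subtype, β, hβ⟩
    have ih' := ih (LinearMap.ker π) hK'
    let ρ : ((Fin m → R) →ₗ[R] X) →ₗ[R] (LinearMap.ker π →ₗ[R] X) :=
      LinearMap.lcomp R X (LinearMap.ker π).subtype
    let σ : (K →ₗ[R] X) →ₗ[R] ((Fin m → R) →ₗ[R] X) := LinearMap.lcomp R X π
    have hF : Gd R N 0 ((Fin m → R) →ₗ[R] X) := by
      intro i hi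
      obtain ⟨j, rfl⟩ : ∃ j, i = j + 1 := ⟨i - 1, by omega⟩
      refine XV.congr ?_ (XV.finsupp (Fin m) j (hX _ hi))
      exact (Finsupp.linearEquivFunOnFinite R X (Fin m)).trans
        ((Pi.basisFun R (Fin m)).constr R)
    have hV : Gd R N d ((LinearMap.ker π →ₗ[R] X) ⧸ LinearMap.range ρ) := by
      apply Gd.quotVS hk
      · exact LocAt.quot _ (hXl.hom _) (LocAt.range _ (hXl.hom _) (hXl.hom _))
      · intro a ha v
        obtain ⟨φ, rfl⟩ := Submodule.mkQ_surjective _ v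
        obtain ⟨β, hβ⟩ := hK.syz π hπ ha
        rw [← map_smul]
        refine (Submodule.Quotient.mk_eq_zero _).2 ⟨φ ∘ₗ β, ?_⟩
        ext k
        simp [ρ, hβ]
    have hI : Gd R N (max (n - s) (d - 1)) (LinearMap.range ρ) := by
      intro i hi
      exact XV.one (f := (LinearMap.range ρ).subtype) (g := (LinearMap.range ρ).mkQ)
        Subtype.val_injective (Submodule.mkQ_surjective _)
        (by rw [LinearMap.exact_iff]; simp) (ih' i hi) (hV (i+1) (by omega))
    intro i hi
    refine XV.one (f := σ) (g := ρ.rangeRestrict) ?_ ρ.surjective_rangeRestrict ?_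
      (hF i (by omega)) (hI (i+1) (by omega))
    · intro f g hfg
      ext x
      obtain ⟨y, rfl⟩ := hπ x
      exact LinearMap.congr_fun hfg y
    · intro f
      constructor
      · intro hf
        have hker : LinearMap.ker π ≤ LinearMap.ker f := by
          intro x hx
          exact LinearMap.congr_fun (congrArg Subtype.val hf) ⟨x, hx⟩
        refine ⟨(LinearMap.ker π).liftQ f hker ∘ₗ
          (LinearMap.quotKerEquivOfSurjective π hπ).symm.toLinearMap, ?_⟩
        ext1 i
        ext1
        simp [σ]
      · rintro ⟨g, rfl⟩
        apply Subtype.ext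
        ext k
        simp [ρ, σ]

theorem AB [IsNoetherianRing R] [p.IsPrime] {N X : Type} [AddCommGroup N] [Module R N]
    [AddCommGroup X] [Module R X] {n : ℕ}
    (hn : ∀ (A : Type) [AddCommGroup A] [Module R A], Gd R N n A)
    (hX : Gd R N 0 X) (hXl : LocAt p X) (x : X) (hx : x ≠ 0) (hpx : ∀ a ∈ p, a • x = 0) :
    Gd R N 0 p.ResidueField := by
  have step : ∀ d, 0 < d → Gd R N d p.ResidueField → Gd R N (d - 1) p.ResidueField := by
    intro d hd hk
    have hPK : PK p (R ⧸ p) := by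
      intro a ha
      refine ⟨0, 0, 0, fun k => ?_⟩
      obtain ⟨k, rfl⟩ := Ideal.Quotient.mk_surjective k
      rw [LinearMap.zero_apply, Algebra.smul_def, eq_comm]
      simp [Ideal.Quotient.eq_zero_iff_mem.2 ha]
    have h := AB_step hn hX hXl hd hk n (R ⧸ p) hPK
    obtain ⟨ι, ⟨e⟩⟩ := vs_equiv p ((R ⧸ p) →ₗ[R] X) (hXl.hom _) (by
      intro a ha φ
      ext
      obtain ⟨m', α, β, hh⟩ := hPK a ha
      have : a • (1 : R ⧸ p) = 0 := by
        rw [Algebra.smul_def]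
        simp [Ideal.Quotient.eq_zero_iff_mem.2 ha]
      change a • φ 1 = 0
      rw [← map_smul, this, map_zero])
    have : Nonempty ι := by
      by_contra hι
      rw [not_nonempty_iff] at hι
      have : Subsingleton ((R ⧸ p) →ₗ[R] X) := e.toEquiv.subsingleton
      let φ : (R ⧸ p) →ₗ[R] X := Submodule.liftQ p (LinearMap.toSpanSingleton R X x) (by
        intro a ha
        simpa using hpx a ha)
      have h0 : φ (Submodule.Quotient.mk 1) = x :=
        (Submodule.liftQ_apply _ _ _).trans (by simp)
      rw [Subsingleton.elim φ 0] at h0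
      exact hx h0.symm
    obtain ⟨i0⟩ := this
    intro i hi
    refine XV.retract (Finsupp.lsingle i0) (Finsupp.lapply i0) (by ext; simp)
      (XV.congr e (h i (by omega)))
  have : ∀ k, Gd R N (n - k) p.ResidueField := by
    intro k
    induction k with
    | zero => exact hn _
    | succ k ih =>
      by_cases h : n - k = 0
      · rw [show n - (k+1) = n - k by omega]; exact ih
      · rw [show n - (k+1) = n - k - 1 by omega]; exact step _ (by omega) ih
  simpa using this n
end AB
section Tors
variable {R : Type} [CommRing R]

/-- the socle filtration -/
def socF (q : Ideal R) (T : Type) [AddCommGroup T] [Module R T] : ℕ → Submodule R T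
  | 0 => ⊥
  | n+1 =>
    { carrier := {t | ∀ a ∈ q, a • t ∈ socF q T n}
      add_mem' := fun hx hy a ha => by
        rw [smul_add]; exact Submodule.add_mem _ (hx a ha) (hy a ha)
      zero_mem' := fun a _ => by rw [smul_zero]; exact Submodule.zero_mem _
      smul_mem' := fun c x hx a ha => by
        rw [smul_comm]; exact Submodule.smul_mem _ _ (hx a ha) }

theorem socF_succ (q : Ideal R) (T : Type) [AddCommGroup T] [Module R T] (n : ℕ) (t : T) :
    t ∈ socF q T (n+1) ↔ ∀ a ∈ q, a • t ∈ socF q T n := Iff.rfl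

theorem socF_le (q : Ideal R) (T : Type) [AddCommGroup T] [Module R T] (n : ℕ) :
    socF q T n ≤ socF q T (n+1) := fun _ ht _ _ => Submodule.smul_mem _ _ ht

theorem socF_mono (q : Ideal R) (T : Type) [AddCommGroup T] [Module R T] :
    Monotone (socF q T) := monotone_nat_of_le_succ (socF_le q T)

theorem socF_pow (q : Ideal R) (T : Type) [AddCommGroup T] [Module R T] (n : ℕ) :
    ∀ (t : T), (∀ a ∈ q ^ n, a • t = 0) → t ∈ socF q T n := by
  induction n with
  | zero =>
    intro t ht
    have := ht 1 (by simp)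
    rw [one_smul] at this
    rw [this]; exact Submodule.zero_mem _
  | succ n ih =>
    intro t ht a ha
    apply ih
    intro b hb
    rw [smul_smul]
    exact ht _ (by rw [pow_succ]; exact Ideal.mul_mem_mul hb ha)

theorem socF_loc {q : Ideal R} {T : Type} [AddCommGroup T] [Module R T] (hT : LocAt q T) (n : ℕ) :
    LocAt q (socF q T n) := by
  have key : ∀ n, ∀ s ∉ q, ∀ t : T, s • t ∈ socF q T n → t ∈ socF q T n := by
    intro n s hs
    induction n with
    | zero =>
      intro t ht
      have h : s • t = 0 := ht
      have : t = 0 := (hT s hs).1 (by simpa using h)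
      rw [this]; exact Submodule.zero_mem _
    | succ n ih =>
      intro t ht a ha
      apply ih
      rw [smul_comm]
      exact ht a ha
  intro s hs
  constructor
  · intro x y h
    exact Subtype.ext ((hT s hs).1 (congrArg Subtype.val h))
  · rintro ⟨y, hy⟩
    obtain ⟨t, ht⟩ := (hT s hs).2 y
    exact ⟨⟨t, key n s hs t (by rw [show s • t = y from ht]; exact hy)⟩, Subtype.ext ht⟩

theorem tors {q : Ideal R} [q.IsPrime] {N T : Type} [AddCommGroup N] [Module R N]
    [AddCommGroup T] [Module R T] (hT : LocAt q T) (hN : PureInjective R N)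
    (hk : Gd R N 0 q.ResidueField) (hq : ∀ t : T, ∃ n : ℕ, ∀ a ∈ q ^ n, a • t = 0) :
    XV R T N 1 := by
  have h : ∀ n, XV R (socF q T n) N 1 := by
    intro n
    induction n with
    | zero =>
      have : Subsingleton (socF q T 0) := inferInstanceAs (Subsingleton (⊥ : Submodule R T))
      exact XV.proj 0
    | succ n ih =>
      let I : Submodule R (socF q T (n+1)) := (socF q T n).submoduleOf (socF q T (n+1))
      let e : I ≃ₗ[R] socF q T n := Submodule.submoduleOfEquivOfLe (socF_le q T n)
      have hI : LocAt q I := by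
        intro s hs
        have := socF_loc hT n s hs
        constructor
        · intro x y hxy
          apply e.injective
          apply this.1
          simpa using congrArg e hxy
        · intro y
          obtain ⟨z, hz⟩ := this.2 (e y)
          refine ⟨e.symm z, e.injective ?_⟩
          simpa using hz
      have hV : Gd R N 0 (socF q T (n+1) ⧸ I) := by
        apply Gd.quotVS hk
        · exact LocAt.quot _ (socF_loc hT _) hI
        · intro a ha v
          obtain ⟨v, rfl⟩ := Submodule.mkQ_surjective _ v
          rw [← map_smul]
          refine (Submodule.Quotient.mk_eq_zero _).2 ?_
          exact v.2 a ha
      exact XV.two (f := I.subtype) (g := I.mkQ) Subtype.val_injective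
        (Submodule.mkQ_surjective _) (by rw [LinearMap.exact_iff]; simp)
        (XV.congr e.symm ih) (hV 1 (by omega))
  have hu := XV.union (socF q T) (socF_mono q T).directed_le hN h
  have htop : (⨆ n, socF q T n) = ⊤ := by
    rw [eq_top_iff]
    intro t _
    obtain ⟨n, hn⟩ := hq t
    exact Submodule.mem_iSup_of_mem n (socF_pow q T n t hn)
  rw [htop] at hu
  exact XV.congr Submodule.topEquiv hu

end Tors

section Hull
variable {R : Type} [CommRing R] {E : Type} [AddCommGroup E] [Module R E]

theorem max_disj (S X : Submodule R E) (h : Disjoint S X) :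
    ∃ T, S ≤ T ∧ Disjoint T X ∧ ∀ T', T ≤ T' → Disjoint T' X → T' = T := by
  obtain ⟨T, hST, hT⟩ := zorn_le_nonempty₀ {T : Submodule R E | Disjoint T X} (by
    intro c hc hch y hy
    refine ⟨sSup c, ?_, fun z hz => le_sSup hz⟩
    change Disjoint (sSup c) X
    rw [Submodule.disjoint_def]
    intro x hx hxX
    rw [Submodule.mem_sSup_of_directed ⟨y, hy⟩ hch.directedOn] at hx
    obtain ⟨z, hz, hxz⟩ := hx
    exact Submodule.disjoint_def.1 (hc hz) x hxz hxX) S h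
  exact ⟨T, hST, hT.prop, fun T' h1 h2 => (hT.eq_of_le h2 h1).symm⟩

theorem inj_retract {A B : Type} [AddCommGroup A] [Module R A] [AddCommGroup B] [Module R B]
    [Module.Injective R A] (i : B →ₗ[R] A) (r : A →ₗ[R] B) (h : ∀ b, r (i b) = b) :
    Module.Injective R B := by
  constructor
  intro X Y _ _ _ _ f hf g
  obtain ⟨k, hk⟩ := Module.Injective.out (R := R) (Q := A) f hf (i ∘ₗ g)
  exact ⟨r ∘ₗ k, fun x => by simp [hk, h]⟩

theorem hull [Module.Injective R E] (S : Submodule R E) :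
    ∃ T : Submodule R E, S ≤ T ∧ Module.Injective R T ∧ ∀ K ≤ T, Disjoint K S → K = ⊥ := by
  obtain ⟨X, -, hXS, hX⟩ := max_disj ⊥ S disjoint_bot_left
  obtain ⟨T, hST, hTX, hT⟩ := max_disj S X hXS.symm
  have hess : ∀ K ≤ T, Disjoint K S → K = ⊥ := by
    intro K hKT hKS
    have h1 : Disjoint (X ⊔ K) S := by
      rw [Submodule.disjoint_def]
      intro z hz hzS
      obtain ⟨x, hx, k, hk, rfl⟩ := Submodule.mem_sup.1 hz
      have : x = 0 := by
        apply Submodule.disjoint_def.1 hTX x _ hx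
        have := T.sub_mem (hST hzS) (hKT hk)
        simpa using this
      subst this
      rw [zero_add] at hzS ⊢
      exact Submodule.disjoint_def.1 hKS k hk hzS
    have h2 := hX _ le_sup_left h1
    have h3 : K ≤ X := by rw [← h2]; exact le_sup_right
    rw [eq_bot_iff, ← disjoint_iff.1 hTX]
    exact le_inf hKT h3
  have hXT : ∀ Y, X ≤ Y → Disjoint Y T → Y = X := fun Y h1 h2 => hX Y h1 (h2.mono_right hST)
  -- extend the projection
  obtain ⟨r, hr⟩ := Module.Injective.out (R := R) (Q := E) (X := T × X) (Y := E)
    (T.subtype.coprod X.subtype) (by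
      rw [injective_iff_map_eq_zero]
      rintro ⟨⟨t, ht⟩, ⟨x, hx⟩⟩ h
      have h : t + x = 0 := by simpa using h
      have h1 : t = 0 := by
        apply Submodule.disjoint_def.1 hTX t ht
        rw [eq_neg_of_add_eq_zero_left h]; exact X.neg_mem hx
      subst h1
      have h2 : x = 0 := by simpa using h
      subst h2; rfl) (T.subtype ∘ₗ LinearMap.fst R T X)
  have hrT : ∀ t ∈ T, r t = t := fun t ht => by simpa using hr (⟨t, ht⟩, 0)
  have hrX : ∀ x ∈ X, r x = 0 := fun x hx => by simpa using hr (0, ⟨x, hx⟩)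
  have hY : (X.comap r) = X := by
    apply hXT
    · intro x hx
      simp [hrX x hx]
    · rw [Submodule.disjoint_def]
      intro t ht htT
      have ht : r t ∈ X := ht
      rw [hrT t htT] at ht
      exact Submodule.disjoint_def.1 hTX t htT ht
  have hrange : LinearMap.range r = T := by
    apply hT
    · intro t ht; exact ⟨t, hrT t ht⟩
    · rw [Submodule.disjoint_def]
      rintro _ ⟨z, rfl⟩ hz
      have : z ∈ X.comap r := hz
      rw [hY] at this
      exact hrX z this
  refine ⟨T, hST, ?_, hess⟩
  refine inj_retract T.subtype (r.codRestrict T fun z => by rw [← hrange]; exact ⟨z, rfl⟩) ?_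
  intro t
  exact Subtype.ext (hrT t t.2)

/-- hull of an element with prime annihilator -/
theorem hull_prime [IsNoetherianRing R] (q : Ideal R) [q.IsPrime] (x : E) (hx : ∀ a, a • x = 0 ↔ a ∈ q)
    (T : Submodule R E) (hT : Module.Injective R T)
    (hess : ∀ t ∈ T, t ≠ 0 → ∃ a b : R, a • t = b • x ∧ b • x ≠ 0) :
    LocAt q T ∧ ∀ t : T, ∃ n : ℕ, ∀ a ∈ q ^ n, a • t = 0 := by
  have hinj : ∀ s ∉ q, ∀ t ∈ T, s • t = 0 → t = 0 := by
    intro s hs t ht h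
    by_contra h0
    obtain ⟨a, b, h1, h2⟩ := hess t ht h0
    apply h2
    have : (s * b) • x = 0 := by
      rw [mul_smul, ← h1, smul_comm, h, smul_zero]
    rw [hx] at this ⊢
    exact (Ideal.IsPrime.mem_or_mem ‹_› this).resolve_left hs
  constructor
  · intro s hs
    have hi : Function.Injective (LinearMap.lsmul R T s) := by
      rw [injective_iff_map_eq_zero]
      intro t ht
      exact Subtype.ext (hinj s hs t t.2 (congrArg Subtype.val ht))
    refine ⟨hi, fun t => ?_⟩
    obtain ⟨ρ, hρ⟩ := Module.Injective.out (R := R) (Q := T) (LinearMap.lsmul R T s) hi LinearMap.id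
    refine ⟨ρ t, ?_⟩
    change s • ρ t = t
    rw [← map_smul]
    exact hρ t
  · intro t
    have hnil : ∀ a ∈ q, ∃ n, a ^ n • t = 0 := by
      intro a ha
      let A : ℕ →o Ideal R := ⟨fun n => LinearMap.ker (LinearMap.toSpanSingleton R T (a ^ n • t)), by
        apply monotone_nat_of_le_succ
        intro n c hc
        have hc : c • a ^ n • t = 0 := hc
        change c • a ^ (n+1) • t = 0
        rw [pow_succ', mul_smul, smul_comm, hc, smul_zero]⟩
      obtain ⟨n, hn⟩ := monotone_stabilizes_iff_noetherian.2 (inferInstanceAs (IsNoetherian R R)) A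
      refine ⟨n, ?_⟩
      by_contra h0
      obtain ⟨c, b, h1, h2⟩ := hess (a ^ n • t : T) (Subtype.property _) (fun h => h0 (Subtype.ext h))
      have h3 : c ∈ A (n+1) := by
        change c • a ^ (n+1) • t = 0
        apply Subtype.ext
        rw [pow_succ', mul_smul, smul_comm]
        change a • c • ((a ^ n • t : T) : E) = 0
        rw [h1, smul_comm, (hx a).2 ha, smul_zero]
      rw [← hn (n+1) (by omega)] at h3
      have h3 : c • (a ^ n • t : T) = 0 := h3
      apply h2
      rw [← h1]
      exact congrArg Subtype.val h3
    let J : Ideal R := LinearMap.ker (LinearMap.toSpanSingleton R T t)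
    obtain ⟨n, hn⟩ := Ideal.exists_pow_le_of_le_radical_of_fg (I := q) (J := J)
      (fun a ha => by
        obtain ⟨n, hn⟩ := hnil a ha
        exact ⟨n, hn⟩) (IsNoetherian.noetherian q)
    exact ⟨n, fun a ha => hn ha⟩
end Hull
section MainZorn
variable {R : Type} [CommRing R] {E : Type} [AddCommGroup E] [Module R E]

theorem inj_union [IsNoetherianRing R] (c : Set (Submodule R E)) (hne : c.Nonempty)
    (hc : DirectedOn (· ≤ ·) c) (h : ∀ T ∈ c, Module.Injective R T) :
    Module.Injective R (sSup c : Submodule R E) := by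
  apply Module.Baer.injective
  intro I g
  have hfg : (LinearMap.range ((sSup c).subtype ∘ₗ g)).FG := by
    rw [LinearMap.range_eq_map]
    have : Module.Finite R I := Module.Finite.iff_fg.2 (IsNoetherian.noetherian I)
    exact this.fg_top.map _
  rw [Submodule.fg_iff_compact, CompleteLattice.isCompactElement_iff_le_of_directed_sSup_le] at hfg
  obtain ⟨T, hT, hle⟩ := hfg c hne hc (by
    rintro _ ⟨x, rfl⟩
    exact (g x).2)
  have hTi := Module.Baer.of_injective (h T hT)
  obtain ⟨g', hg'⟩ := hTi I (((sSup c).subtype ∘ₗ g).codRestrict T fun x => hle ⟨x, rfl⟩)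
  refine ⟨Submodule.inclusion (le_sSup hT) ∘ₗ g', fun x hx => ?_⟩
  apply Subtype.ext
  simp [hg' x hx]

theorem inj_prod {A B : Type} [AddCommGroup A] [Module R A] [AddCommGroup B] [Module R B]
    (hA : Module.Injective R A) (hB : Module.Injective R B) : Module.Injective R (A × B) := by
  constructor
  intro X Y _ _ _ _ f hf g
  obtain ⟨k, hk⟩ := hA.out f hf (LinearMap.fst R A B ∘ₗ g)
  obtain ⟨l, hl⟩ := hB.out f hf (LinearMap.snd R A B ∘ₗ g)
  exact ⟨k.prod l, fun x => by ext <;> simp [hk, hl]⟩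

theorem mainE [IsNoetherianRing R] [hE : Module.Injective R E] {N : Type} [AddCommGroup N] [Module R N]
    (hN : PureInjective R N)
    (hk : ∀ (q : Ideal R) [q.IsPrime] (x : E), (∀ a, a • x = 0 ↔ a ∈ q) → Gd R N 0 q.ResidueField) :
    XV R E N 1 := by
  obtain ⟨N0, -, hmax⟩ := zorn_le_nonempty₀
    {T : Submodule R E | Module.Injective R T ∧ XV R T N 1} (by
    intro c hc hch y hy
    refine ⟨sSup c, ⟨inj_union c ⟨y, hy⟩ hch.directedOn fun T hT => (hc hT).1, ?_⟩,
      fun z hz => le_sSup hz⟩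
    have : Nonempty c := ⟨⟨y, hy⟩⟩
    have := XV.union (fun i : c => (i : Submodule R E)) (hch.directedOn.directed_val) hN
      (fun i => (hc i.2).2)
    rw [sSup_eq_iSup']
    exact this) ⊥ ⟨by
      constructor
      intro X Y _ _ _ _ f hf g
      exact ⟨0, fun x => Subsingleton.elim _ _⟩, XV.proj 0⟩
  obtain ⟨hi, hXV⟩ := hmax.prop
  by_cases htop : N0 = ⊤
  · rw [htop] at hXV
    exact XV.congr Submodule.topEquiv hXV
  exfalso
  obtain ⟨ρ, hρ⟩ := hi.out N0.subtype Subtype.val_injective LinearMap.id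
  have : Nontrivial (LinearMap.ker ρ) := by
    rw [Submodule.nontrivial_iff_ne_bot]
    intro hb
    apply htop
    rw [eq_top_iff]
    intro y _
    have : y - ρ y ∈ LinearMap.ker ρ := by
      have := hρ (ρ y)
      simp only [Submodule.subtype_apply, LinearMap.id_apply] at this
      simp [this]
    rw [hb, Submodule.mem_bot, sub_eq_zero] at this
    rw [this]; exact (ρ y).2
  obtain ⟨q, hq⟩ := associatedPrimes.nonempty R (LinearMap.ker ρ)
  obtain ⟨hqp, ⟨x, hxk⟩, hx⟩ := isAssociatedPrime_iff.1 hq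
  have hxq : ∀ a, a • x = 0 ↔ a ∈ q := by
    intro a
    rw [hx, Submodule.mem_colon_singleton, Submodule.mem_bot, Subtype.ext_iff]
    rfl
  have hx0 : x ≠ 0 := by
    intro h
    apply hqp.ne_top
    rw [Ideal.eq_top_iff_one, ← hxq, h, smul_zero]
  obtain ⟨T, hST, hTi, hess⟩ := hull (R := R) (Submodule.span R {x})
  have hxT : x ∈ T := hST (Submodule.mem_span_singleton_self x)
  have hdis : T ⊓ N0 = ⊥ := by
    apply hess _ inf_le_left
    rw [Submodule.disjoint_def]
    intro z hz hzx
    have h1 : ρ z = 0 := by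
      obtain ⟨a, rfl⟩ := Submodule.mem_span_singleton.1 hzx
      rw [map_smul, show ρ x = 0 from hxk, smul_zero]
    have h2 := hρ ⟨z, hz.2⟩
    simp only [Submodule.subtype_apply, LinearMap.id_apply] at h2
    rw [h1] at h2
    exact (congrArg Subtype.val h2).symm
  obtain ⟨hl, hn⟩ := hull_prime q x hxq T hTi (by
    intro t ht ht0
    by_contra hcon
    push Not at hcon
    have : Submodule.span R {t} = ⊥ := by
      apply hess
      · rwa [Submodule.span_singleton_le_iff_mem]
      · rw [Submodule.disjoint_def]
        intro z hz hzx
        obtain ⟨a, rfl⟩ := Submodule.mem_span_singleton.1 hz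
        obtain ⟨b, hb⟩ := Submodule.mem_span_singleton.1 hzx
        rw [← hb]
        exact hcon a b hb.symm
    exact ht0 (Submodule.span_singleton_eq_bot.1 this))
  have hTX : XV R T N 1 := tors hl hN (hk q x hxq) hn
  let φ : (N0 × T) →ₗ[R] E := N0.subtype.coprod T.subtype
  have hφ : Function.Injective φ := by
    rw [injective_iff_map_eq_zero]
    rintro ⟨⟨t, ht⟩, ⟨x, hx⟩⟩ h
    have h : t + x = 0 := by simpa [φ] using h
    have h1 : t = 0 := by
      apply Submodule.disjoint_def.1 (disjoint_iff.2 hdis) t _ ht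
      rw [eq_neg_of_add_eq_zero_left h]; exact T.neg_mem hx
    subst h1
    have h2 : x = 0 := by simpa using h
    subst h2; rfl
  let e := LinearEquiv.ofInjective φ hφ
  have hle : N0 ≤ LinearMap.range φ := fun z hz => ⟨(⟨z, hz⟩, 0), by simp [φ]⟩
  have hle' : T ≤ LinearMap.range φ := fun z hz => ⟨(0, ⟨z, hz⟩), by simp [φ]⟩
  have hxv : XV R (N0 × T) N 1 :=
    XV.two (f := LinearMap.inl R N0 T) (g := LinearMap.snd R N0 T) LinearMap.inl_injective
      LinearMap.snd_surjective (by rw [LinearMap.exact_iff, LinearMap.ker_snd]) hXV hTX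
  have hpi := inj_prod hi hTi
  have heq : N0 = LinearMap.range φ := hmax.eq_of_le
    ⟨inj_retract (A := N0 × T) e.symm.toLinearMap e.toLinearMap (by simp), XV.congr e hxv⟩ hle
  have hxN : x ∈ N0 := by rw [heq]; exact hle' hxT
  have : x ∈ T ⊓ N0 := ⟨hxT, hxN⟩
  rw [hdis] at this
  exact hx0 this
end MainZorn
/-- let `(𝒞, 𝒲)` be a hereditary cotorsion pair over a commutative
noetherian ring cogenerated by a class of pure-injective modules of finite injective
dimension. For any module `M` with injective envelope `M ↪ E`:
(i) `M` embeds into some module of `𝒞` iff `E(M) ∈ 𝒞`;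
(ii) `M ∈ 𝒞` iff `M` embeds into some module of `𝒞` and `Ω_{-1}(M) = E(M)/M ∈ 𝒞_(1)`. -/
theorem stmt11 (R : Type) [CommRing R] [IsNoetherianRing R]
    (𝒞 𝒲 Pcl : Set (ModuleCat.{0} R))
    (hpair : IsHereditaryCotorsionPair R 𝒞 𝒲)
    (hP : Pcl ⊆ PIFinInj R)
    (hcogen : 𝒞 = leftPerp1 R Pcl)
    (M : ModuleCat.{0} R)
    (E : Type) [AddCommGroup E] [Module R E] (f : ↥M →ₗ[R] E)
    (henv : IsInjectiveEnvelope R f) :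
    ((∃ C ∈ 𝒞, ∃ g : ↥M →ₗ[R] ↥C, Function.Injective g) ↔ ModuleCat.of R E ∈ 𝒞) ∧
    (M ∈ 𝒞 ↔ ((∃ C ∈ 𝒞, ∃ g : ↥M →ₗ[R] ↥C, Function.Injective g) ∧
      ModuleCat.of R (E ⧸ LinearMap.range f) ∈ cotShift R 𝒲 1)) := by
  have toXV : ∀ (A B : ModuleCat.{0} R) (j : ℕ), extV R A B (j+1) ↔ XV R A B (j+1) :=
    fun A B j => extV_iff R A B j
  obtain ⟨⟨hC, hW⟩, hher⟩ := hpair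
  have hPW : ∀ P ∈ Pcl, P ∈ 𝒲 := by
    intro P hPP
    rw [hW]
    intro X hX
    rw [hcogen] at hX
    exact hX P hPP
  obtain ⟨hE, hfi, hess⟩ := henv
  have hi : (∃ C ∈ 𝒞, ∃ g : ↥M →ₗ[R] ↥C, Function.Injective g) ↔ ModuleCat.of R E ∈ 𝒞 := by
    constructor
    · rintro ⟨C, hCC, g, hg⟩
      rw [hcogen]
      intro N hNP
      rw [toXV]
      obtain ⟨hN, n, hn⟩ := hP hNP
      refine mainE (E := E) hN ?_
      intro q hq x hx
      have hx0 : x ≠ 0 := by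
        intro h
        apply hq.ne_top
        rw [Ideal.eq_top_iff_one, ← hx, h, smul_zero]
      have h1 := hess (Submodule.span R {x}) (by simpa using hx0)
      obtain ⟨z, ⟨hz1, m, rfl⟩, hz0⟩ := Submodule.exists_mem_ne_zero_of_ne_bot h1
      obtain ⟨b, hb⟩ := Submodule.mem_span_singleton.1 hz1
      have hm : ∀ a : R, a • m = 0 ↔ a ∈ q := by
        intro a
        rw [← map_eq_zero_iff f hfi, map_smul, ← hb, smul_smul, hx]
        have hbq : b ∉ q := by
          intro h
          rw [← hx, hb] at h
          exact hz0 h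
        exact ⟨fun h => (hq.mem_or_mem h).resolve_right hbq, fun h => q.mul_mem_right _ h⟩
      have hy : ∀ a : R, a • g m = 0 ↔ a ∈ q := by
        intro a
        rw [← map_smul, map_eq_zero_iff g hg, hm]
      let X := LocalizedModule q.primeCompl C
      have hXC : ModuleCat.of R X ∈ 𝒞 := by
        rw [hcogen]
        intro P hPP
        rw [toXV]
        rw [hcogen] at hCC
        exact XV.loc q.primeCompl (hP hPP).1 ((toXV _ _ 0).1 (hCC P hPP))
      refine AB (n := n) (X := X) ?_ ?_ ?_ (LocalizedModule.mkLinearMap q.primeCompl C (g m)) ?_ ?_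
      · intro A _ _ i hi
        obtain ⟨j, rfl⟩ : ∃ j, i = j + 1 := ⟨i - 1, by omega⟩
        exact (toXV (ModuleCat.of R A) N j).1 (hn _ _ hi)
      · intro i hi
        obtain ⟨j, rfl⟩ : ∃ j, i = j + 1 := ⟨i - 1, by omega⟩
        exact (toXV (ModuleCat.of R X) N j).1 (hher _ hXC N (hPW N hNP) _ (by omega))
      · intro s hs
        have := IsLocalizedModule.map_units
          (LocalizedModule.mkLinearMap q.primeCompl C) (⟨s, hs⟩ : q.primeCompl)
        rw [Module.End.isUnit_iff] at this
        exact this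
      · intro h
        obtain ⟨s, hs⟩ := (IsLocalizedModule.eq_zero_iff q.primeCompl
          (LocalizedModule.mkLinearMap q.primeCompl C)).1 h
        exact s.2 ((hy s).1 hs)
      · intro a ha
        rw [← map_smul, (hy a).2 ha, map_zero]
    · intro h
      exact ⟨_, h, f, hfi⟩
  refine ⟨hi, ?_⟩
  have hex : Function.Exact f (LinearMap.range f).mkQ := by
    rw [LinearMap.exact_iff]; simp
  constructor
  · intro hM
    have hex1 : ∃ C ∈ 𝒞, ∃ g : ↥M →ₗ[R] ↥C, Function.Injective g :=
      ⟨M, hM, LinearMap.id, fun _ _ h => h⟩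
    have hEC := hi.1 hex1
    refine ⟨hex1, ?_⟩
    intro Y hY j hj
    obtain ⟨k, rfl⟩ : ∃ k, j = k + 1 + 1 := ⟨j - 2, by omega⟩
    rw [toXV]
    exact XV.three (f := f) (g := (LinearMap.range f).mkQ) hfi (Submodule.mkQ_surjective _) hex
      ((toXV _ _ _).1 (hher M hM Y hY (k+1) (by omega)))
      ((toXV (ModuleCat.of R E) _ _).1 (hher _ hEC Y hY (k+1+1) (by omega)))
  · rintro ⟨h1, h2⟩
    have hEC := hi.1 h1
    rw [hC]
    intro Y hY
    rw [toXV]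
    exact XV.one (f := f) (g := (LinearMap.range f).mkQ) hfi (Submodule.mkQ_surjective _) hex
      ((toXV (ModuleCat.of R E) _ 0).1 (hher _ hEC Y hY 1 (by omega)))
      ((toXV (ModuleCat.of R (E ⧸ LinearMap.range f)) _ 1).1 (h2 Y hY 2 (by omega)))
end
end

section
/- Let R be a commutative noetherian ring and (C, W) a hereditary cotorsion pair cogenerated by a class P of pure-injective R-modules of finite injective dimension. Define φ : Spec R → ℤ_{≥0} by φ(p) = inf{i ∈ ℤ_{≥0} : k(p) ∈ C_(i)}. Then φ(p) ≤ depth(R_p) for every prime ideal p of R. -/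
open CategoryTheory Opposite

noncomputable section

lemma my_extV_iff (R : Type) [Ring R] (M N : ModuleCat.{0} R) (n : ℕ) :
    extV R M N n ↔ Subsingleton (Abelian.Ext.{0} M N n) := by
  obtain ⟨P⟩ : Nonempty (ProjectiveResolution M) := ⟨ProjectiveResolution.of M⟩
  have h1 : extV R M N n ↔ (P.complex.linearYonedaObj ℤ N).ExactAt n := by
    rw [HomologicalComplex.exactAt_iff_isZero_homology]
    unfold extV
    rw [← ModuleCat.isZero_iff_subsingleton]
    exact (P.isoExt n N).isZero_iff
  rw [h1]
  cases n with
  | zero =>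
    rw [HomologicalComplex.exactAt_iff' _ 0 0 1 (by simp) (by simp),
      ShortComplex.moduleCat_exact_iff]
    constructor
    · intro h
      refine ⟨fun a b => ?_⟩
      obtain ⟨a, rfl⟩ := (Abelian.Ext.mk₀_bijective _ _).2 a
      obtain ⟨b, rfl⟩ := (Abelian.Ext.mk₀_bijective _ _).2 b
      congr 1
      obtain ⟨z, hz⟩ := h (P.π.f 0 ≫ (HomologicalComplex.singleObjXSelf _ 0 M).hom ≫ (a - b)) (by
        change P.complex.d 1 0 ≫ P.π.f 0 ≫ _ = 0
        rw [P.complex_d_comp_π_f_zero_assoc, Limits.zero_comp])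
      have h0 : P.complex.d 0 0 = 0 := P.complex.shape 0 0 (by simp)
      have hz' : P.complex.d 0 0 ≫ z = P.π.f 0 ≫
        (HomologicalComplex.singleObjXSelf _ 0 M).hom ≫ (a - b) := hz
      have hz'' : (0 : P.complex.X 0 ⟶ N) = P.π.f 0 ≫
        (HomologicalComplex.singleObjXSelf _ 0 M).hom ≫ (a - b) := by
        refine Eq.trans ?_ hz'
        rw [h0]
        exact Limits.zero_comp.symm
      rw [← sub_eq_zero, ← cancel_epi (HomologicalComplex.singleObjXSelf
        (ComplexShape.down ℕ) 0 M).hom, ← cancel_epi (P.π.f 0), ← hz'', Limits.comp_zero]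
      exact Limits.comp_zero.symm
    · intro h f hf
      refine ⟨0, ?_⟩
      have hf' : P.complex.d 1 0 ≫ f = 0 := hf
      have : f = 0 := by
        have hc := P.exact₀.gIsCokernel
        let D := Limits.CokernelCofork.IsColimit.desc' hc f hf'
        have hD : P.π.f 0 ≫ D.1 = f := D.2
        have h3 : (HomologicalComplex.singleObjXSelf (ComplexShape.down ℕ) 0 M).inv ≫ D.1
            = (0 : M ⟶ N) :=
          (Abelian.Ext.mk₀_bijective M N).1 (Subsingleton.elim _ _)
        have h4 : D.1 = 0 := by
          rw [← cancel_epi (HomologicalComplex.singleObjXSelf (ComplexShape.down ℕ) 0 M).inv]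
          exact h3.trans Limits.comp_zero.symm
        rw [← hD, h4, Limits.comp_zero]; rfl
      rw [this]; simp
  | succ n =>
    rw [HomologicalComplex.exactAt_iff' _ n (n+1) (n+2) (by simp) (by simp),
      ShortComplex.moduleCat_exact_iff]
    constructor
    · intro h
      refine subsingleton_of_forall_eq 0 fun a => ?_
      obtain ⟨f, hf, rfl⟩ := P.extMk_surjective a (n+2) rfl
      rw [P.extMk_eq_zero_iff f _ _ hf n rfl]
      exact h f hf
    · intro h f hf
      exact (P.extMk_eq_zero_iff f (n+2) rfl hf n rfl).1 (Subsingleton.elim _ _)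

lemma my_ses {R : Type} [Ring R] {A B C : Type} [AddCommGroup A] [AddCommGroup B] [AddCommGroup C]
    [Module R A] [Module R B] [Module R C] (f : A →ₗ[R] B) (g : B →ₗ[R] C)
    (hf : Function.Injective f) (hfg : Function.Exact f g) (hg : Function.Surjective g) :
    (ShortComplex.mk (ModuleCat.ofHom f) (ModuleCat.ofHom g)
      (by ext x; exact hfg.apply_apply_eq_zero x)).ShortExact where
  exact := by
    rw [ShortComplex.moduleCat_exact_iff]
    intro x hx
    exact (hfg x).1 hx
  mono_f := (ModuleCat.mono_iff_injective _).2 hf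
  epi_g := (ModuleCat.epi_iff_surjective _).2 hg

/-- Ext vanishing, unbundled. -/
abbrev EV (R : Type) [Ring R] (M N : Type) [AddCommGroup M] [AddCommGroup N]
    [Module R M] [Module R N] (j : ℕ) : Prop :=
  Subsingleton (Abelian.Ext.{0} (ModuleCat.of R M) (ModuleCat.of R N) j)

section
variable {R : Type} [Ring R] {A B C N : Type} [AddCommGroup A] [AddCommGroup B] [AddCommGroup C]
    [AddCommGroup N] [Module R N]
    [Module R A] [Module R B] [Module R C] (f : A →ₗ[R] B) (g : B →ₗ[R] C)
    (hf : Function.Injective f) (hfg : Function.Exact f g) (hg : Function.Surjective g)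

include hf hfg hg

lemma EV.mid {j : ℕ} (h1 : EV R A N j) (h3 : EV R C N j) : EV R B N j := by
  refine subsingleton_of_forall_eq 0 fun x => ?_
  obtain ⟨y, hy⟩ := Abelian.Ext.contravariant_sequence_exact₂ (my_ses f g hf hfg hg) _ x
    (@Subsingleton.elim _ h1 _ _)
  rw [← hy, @Subsingleton.elim _ h3 y 0, Abelian.Ext.comp_zero]

lemma EV.left {j : ℕ} (h2 : EV R B N j) (h3 : EV R C N (j+1)) : EV R A N j := by
  refine subsingleton_of_forall_eq 0 fun x => ?_
  obtain ⟨y, hy⟩ := Abelian.Ext.contravariant_sequence_exact₁ (my_ses f g hf hfg hg) _ x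
    (add_comm 1 j) (@Subsingleton.elim _ h3 _ _)
  rw [← hy, @Subsingleton.elim _ h2 y 0, Abelian.Ext.comp_zero]

lemma EV.right {j : ℕ} (h2 : EV R B N (j+1)) (h1 : EV R A N j) : EV R C N (j+1) := by
  refine subsingleton_of_forall_eq 0 fun x => ?_
  obtain ⟨y, hy⟩ := Abelian.Ext.contravariant_sequence_exact₃ (my_ses f g hf hfg hg) _ x
    (@Subsingleton.elim _ h2 _ _) (add_comm 1 j) 
  rw [← hy, @Subsingleton.elim _ h1 y 0, Abelian.Ext.comp_zero]

lemma EV.one_of_extend (h2 : EV R B N 1) (h : ∀ u : A →ₗ[R] N, ∃ v : B →ₗ[R] N, v.comp f = u) :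
    EV R C N 1 := by
  refine subsingleton_of_forall_eq 0 fun x => ?_
  obtain ⟨y, hy⟩ := Abelian.Ext.contravariant_sequence_exact₃ (my_ses f g hf hfg hg) _ x
    (@Subsingleton.elim _ h2 _ _) (add_comm 1 0) 
  obtain ⟨u, rfl⟩ := (Abelian.Ext.mk₀_bijective _ _).2 y
  obtain ⟨v, hv⟩ := h u.hom
  have : u = ModuleCat.ofHom f ≫ ModuleCat.ofHom v := by
    ext x; exact (LinearMap.congr_fun hv x).symm
  subst this
  rw [← hy, ← Abelian.Ext.mk₀_comp_mk₀]
  exact (my_ses f g hf hfg hg).extClass_comp_assoc _ 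

lemma EV.extend (h : EV R C N 1) (u : A →ₗ[R] N) : ∃ v : B →ₗ[R] N, v.comp f = u := by
  obtain ⟨y, hy⟩ := Abelian.Ext.contravariant_sequence_exact₁ (my_ses f g hf hfg hg) _ 
    (Abelian.Ext.mk₀ (ModuleCat.ofHom u))
    (add_comm 1 0) (@Subsingleton.elim _ h _ _)
  obtain ⟨v, rfl⟩ := (Abelian.Ext.mk₀_bijective _ _).2 y
  simp only [Abelian.Ext.mk₀_comp_mk₀] at hy
  have := (Abelian.Ext.mk₀_bijective _ _).1 hy
  exact ⟨v.hom, by rw [← ModuleCat.hom_ofHom u, ← this]; rfl⟩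
end

lemma EV.proj {R : Type} [Ring R] {M N : Type} [AddCommGroup M] [AddCommGroup N]
    [Module R M] [Module R N] [Module.Projective R M] (j : ℕ) : EV R M N (j+1) := by
  have : Projective (ModuleCat.of R M) := (IsProjective.iff_projective _).1 inferInstance
  exact Abelian.Ext.subsingleton_of_projective _ _ _

lemma EV.retract {R : Type} [Ring R] {M M' N : Type} [AddCommGroup M] [AddCommGroup N]
    [AddCommGroup M'] [Module R M'] [Module R M] [Module R N] (i : M →ₗ[R] M') (r : M' →ₗ[R] M)
    (h : r.comp i = LinearMap.id) {j : ℕ} (h : EV R M' N j) : EV R M N j := by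
  refine subsingleton_of_forall_eq 0 fun x => ?_
  have : x = (Abelian.Ext.mk₀ (ModuleCat.ofHom i)).comp
    ((Abelian.Ext.mk₀ (ModuleCat.ofHom r)).comp x (zero_add j)) (zero_add j) := by
    rw [Abelian.Ext.mk₀_comp_mk₀_assoc]
    have : ModuleCat.ofHom i ≫ ModuleCat.ofHom r = 𝟙 _ := by
      rw [← ModuleCat.ofHom_comp]; simp [*]
    rw [this, Abelian.Ext.mk₀_id_comp]
  rw [this, @Subsingleton.elim _ h (Abelian.Ext.comp _ _ _) 0, Abelian.Ext.comp_zero]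

lemma my_flat_ker {R : Type} [CommRing R] {A B C : Type} [AddCommGroup A] [AddCommGroup B]
    [AddCommGroup C]
    [Module R A] [Module R B] [Module R C] (f : A →ₗ[R] B) (g : B →ₗ[R] C)
    (hf : Function.Injective f) (hfg : Function.Exact f g) (hg : Function.Surjective g)
    [Module.Flat R B] [Module.Flat R C] : Module.Flat R A := by
  rw [Module.Flat.iff_rTensor_injective']
  intro I
  have h1 := LinearMap.lTensor_injective_of_exact_of_flat g hg f hf hfg I
  have h2 := Module.Flat.rTensor_preserves_injective_linearMap (M := B) I.subtype
    I.injective_subtype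
  have h3 : Function.Injective ((LinearMap.lTensor R f) ∘ₗ (LinearMap.rTensor A I.subtype)) := by
    rw [LinearMap.lTensor_comp_rTensor, ← LinearMap.rTensor_comp_lTensor]
    exact h2.comp h1
  exact Function.Injective.of_comp h3

lemma my_pure {R : Type} [CommRing R] {A B C : Type} [AddCommGroup A] [AddCommGroup B]
    [AddCommGroup C]
    [Module R A] [Module R B] [Module R C] (f : A →ₗ[R] B) (g : B →ₗ[R] C)
    (hf : Function.Injective f) (hfg : Function.Exact f g) (hg : Function.Surjective g)
    [Module.Flat R C] : IsPureMono R f :=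
  ⟨hf, fun Q _ _ => LinearMap.lTensor_injective_of_exact_of_flat g hg f hf hfg Q⟩

lemma EV.flat {R : Type} [CommRing R] {N : Type} [AddCommGroup N] [Module R N]
    (hN : PureInjective R N) (j : ℕ) : ∀ (M : Type) [AddCommGroup M]
    [Module R M] [Module.Flat R M], EV R M N (j+1) := by
  induction j with
  | zero =>
    intro M _ _ _
    let g := Finsupp.linearCombination R (id : M → M)
    have hg : Function.Surjective g := Finsupp.linearCombination_id_surjective R M
    refine EV.one_of_extend (A := g.ker) g.ker.subtype g g.ker.injective_subtype
      (LinearMap.exact_subtype_ker_map g) hg (EV.proj 0) ?_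
    exact hN g.ker _ g.ker.subtype (my_pure (A := g.ker) g.ker.subtype g g.ker.injective_subtype
      (LinearMap.exact_subtype_ker_map g) hg)
  | succ j ih =>
    intro M _ _ _
    let g := Finsupp.linearCombination R (id : M → M)
    have hg : Function.Surjective g := Finsupp.linearCombination_id_surjective R M
    have := my_flat_ker (A := g.ker) g.ker.subtype g g.ker.injective_subtype
      (LinearMap.exact_subtype_ker_map g) hg
    exact EV.right (A := g.ker) g.ker.subtype g g.ker.injective_subtype
      (LinearMap.exact_subtype_ker_map g) hg (EV.proj _) (ih _)

/-- Multiplication by elements of the maximal ideal factors through a finite free module. -/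
def QF (A : Type) [CommRing A] [IsLocalRing A] (M : Type) [AddCommGroup M] [Module A M] : Prop :=
  ∀ x ∈ IsLocalRing.maximalIdeal A, ∃ (n : ℕ) (a : M →ₗ[A] (Fin n → A)) (b : (Fin n → A) →ₗ[A] M),
    ∀ m, b (a m) = x • m

lemma QF.ker_ext {A : Type} [CommRing A] [IsLocalRing A] {M : Type} [AddCommGroup M] [Module A M]
    (h : QF A M) {n : ℕ} (g : (Fin n → A) →ₗ[A] M) (hg : Function.Surjective g)
    (x : A) (hx : x ∈ IsLocalRing.maximalIdeal A) :
    ∃ w : (Fin n → A) →ₗ[A] g.ker, ∀ m : g.ker, w m = x • m := by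
  obtain ⟨l, a, b, hab⟩ := h x hx
  obtain ⟨c, hc⟩ := Module.projective_lifting_property g b hg
  refine ⟨LinearMap.codRestrict _ (x • LinearMap.id - c ∘ₗ a ∘ₗ g) fun y => ?_, fun m => ?_⟩
  · have := LinearMap.congr_fun hc (a (g y))
    simp only [LinearMap.comp_apply] at this
    simp [this, hab]
  · ext1
    simp

lemma QF.ker {A : Type} [CommRing A] [IsLocalRing A] {M : Type} [AddCommGroup M] [Module A M]
    (h : QF A M) {n : ℕ} (g : (Fin n → A) →ₗ[A] M) (hg : Function.Surjective g) :
    QF A g.ker := by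
  intro x hx
  obtain ⟨w, hw⟩ := h.ker_ext g hg x hx
  exact ⟨n, g.ker.subtype, w, hw⟩

lemma QF.residue {A : Type} [CommRing A] [IsLocalRing A] : QF A (IsLocalRing.ResidueField A) := by
  intro x hx
  refine ⟨0, 0, 0, fun m => ?_⟩
  have : x • m = 0 := by
    rw [Algebra.smul_def, IsLocalRing.ResidueField.algebraMap_eq,
      (IsLocalRing.residue_eq_zero_iff x).2 hx, zero_mul]
  simp [this]

lemma my_killed_equiv {A : Type} [CommRing A] [IsLocalRing A] (H : Type) [AddCommGroup H]
    [Module A H] [Module.Finite A H]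
    (hH : ∀ x ∈ IsLocalRing.maximalIdeal A, ∀ y : H, x • y = 0) :
    ∃ m : ℕ, Nonempty (H ≃ₗ[A] (Fin m → IsLocalRing.ResidueField A)) := by
  have hT : Module.IsTorsionBySet A H (IsLocalRing.maximalIdeal A) := fun y x => hH x x.2 y
  let _ : Module (IsLocalRing.ResidueField A) H := hT.module
  have : IsScalarTower A (IsLocalRing.ResidueField A) H := hT.isScalarTower
  have : Module.Finite (IsLocalRing.ResidueField A) H := Module.Finite.of_restrictScalars_finite A _ _
  exact ⟨_, ⟨(Module.finBasis (IsLocalRing.ResidueField A) H).equivFun.restrictScalars A⟩⟩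

/-- An `A`-module killed by the maximal ideal, finitely generated: Ext vanishing from `k`. -/
lemma EV.of_killed {R A N : Type} [CommRing R] [CommRing A] [IsLocalRing A] [Algebra R A]
    [AddCommGroup N] [Module R N] {j : ℕ}
    (h : EV R (IsLocalRing.ResidueField A) N j) (H : Type) [AddCommGroup H] [Module A H] [Module R H]
    [IsScalarTower R A H] [Module.Finite A H]
    (hH : ∀ x ∈ IsLocalRing.maximalIdeal A, ∀ y : H, x • y = 0) : EV R H N j := by
  obtain ⟨m, ⟨e⟩⟩ := my_killed_equiv H hH
  have key : ∀ m : ℕ, EV R (Fin m → IsLocalRing.ResidueField A) N j := by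
    intro m
    induction m with
    | zero => exact EV.retract (M' := IsLocalRing.ResidueField A) 0 0 (by ext i; exact i.elim0) h
    | succ m ih =>
      refine EV.mid (LinearMap.single R (fun _ : Fin (m+1) => IsLocalRing.ResidueField A) 0)
        (LinearMap.funLeft R (IsLocalRing.ResidueField A) Fin.succ) ?_ ?_ ?_ h ih
      · exact Pi.single_injective (M := fun _ : Fin (m+1) => IsLocalRing.ResidueField A) 0
      · intro y
        constructor
        · intro hy
          refine ⟨y 0, ?_⟩
          ext i
          refine Fin.cases ?_ (fun i => ?_) i
          · simp
          · have := congr_fun hy i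
            simpa using this.symm
        · rintro ⟨z, rfl⟩
          ext i
          simp
      · exact LinearMap.funLeft_surjective_of_injective _ _ _ (Fin.succ_injective _)
  exact EV.retract (e.toLinearMap.restrictScalars R) (e.symm.toLinearMap.restrictScalars R)
    (by ext; simp) (key m)

lemma EV.residue_of_killed {R A N : Type} [CommRing R] [CommRing A] [IsLocalRing A] [Algebra R A]
    [AddCommGroup N] [Module R N] {j : ℕ}
    (H : Type) [AddCommGroup H] [Module A H] [Module R H]
    [IsScalarTower R A H] [Module.Finite A H] [Nontrivial H] (h : EV R H N j)
    (hH : ∀ x ∈ IsLocalRing.maximalIdeal A, ∀ y : H, x • y = 0) :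
    EV R (IsLocalRing.ResidueField A) N j := by
  obtain ⟨m, ⟨e⟩⟩ := my_killed_equiv H hH
  cases m with
  | zero => exact absurd e.toEquiv.subsingleton (not_subsingleton H)
  | succ m =>
    exact EV.retract
      ((e.symm.toLinearMap.restrictScalars R) ∘ₗ
        (LinearMap.single R (fun _ : Fin (m+1) => IsLocalRing.ResidueField A) 0))
      ((LinearMap.proj 0) ∘ₗ (e.toLinearMap.restrictScalars R))
      (by ext; simp) h

lemma EV.of_subsingleton {R : Type} [Ring R] {M N : Type} [AddCommGroup M] [AddCommGroup N]
    [Module R M] [Module R N] [Subsingleton M] (j : ℕ) : EV R M N j := by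
  refine subsingleton_of_forall_eq 0 fun x => ?_
  have h0 : 𝟙 (ModuleCat.of R M) = 0 := by
    ext y; exact Subsingleton.elim (α := M) _ _
  rw [← Abelian.Ext.mk₀_id_comp x, h0, Abelian.Ext.mk₀_zero, Abelian.Ext.zero_comp]

lemma EV.zero_iff {R : Type} [Ring R] {M N : Type} [AddCommGroup M] [AddCommGroup N]
    [Module R M] [Module R N] : EV R M N 0 ↔ Subsingleton (M →ₗ[R] N) := 
  Abelian.Ext.addEquiv₀.toEquiv.subsingleton_congr.trans
    (ModuleCat.homEquiv).subsingleton_congr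

lemma my_syz {R A N : Type} [CommRing R] [CommRing A] [IsLocalRing A] [IsNoetherianRing A]
    [Algebra R A] [Module.Flat R A] [AddCommGroup N] [Module R N] (hN : PureInjective R N)
    (M : Type) [AddCommGroup M] [Module A M] [Module.Finite A M] (hM : QF A M) :
    ∃ (K : Type) (_ : AddCommGroup K) (_ : Module A K), Module.Finite A K ∧ QF A K ∧
      (∀ i, EV A M A (i+2) ↔ EV A K A (i+1)) ∧
      ∃ b h : ℕ → Prop,
        (∀ j, b (j+2) → EV R (Module.Dual A M) N (j+1)) ∧
        (∀ j, EV R (Module.Dual A M) N j → b (j+1)) ∧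
        (∀ j, EV R (Module.Dual A K) N j → h (j+1) → b j) ∧
        (∀ j, b j → EV R (Module.Dual A K) N (j+1) → h (j+1)) ∧
        (EV A M A 1 → ∀ j, b j → EV R (Module.Dual A K) N j) ∧
        (∀ j, EV R (IsLocalRing.ResidueField A) N j → h j) ∧
        (¬ EV A M A 1 → ∀ j, h j → EV R (IsLocalRing.ResidueField A) N j) := by
  obtain ⟨n, g, hg⟩ := Module.Finite.exists_fin' A M
  have hex := LinearMap.exact_subtype_ker_map g
  let r : Module.Dual A (Fin n → A) →ₗ[A] Module.Dual A g.ker := g.ker.subtype.dualMap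
  let B := LinearMap.range r
  let H := Module.Dual A g.ker ⧸ B
  have hflat : Module.Flat R (Module.Dual A (Fin n → A)) := Module.Flat.trans R A _
  have e1 : Function.Injective (g.dualMap.restrictScalars R) :=
    LinearMap.dualMap_injective_of_surjective hg
  have e2 : Function.Exact (g.dualMap.restrictScalars R) (r.rangeRestrict.restrictScalars R) := by
    intro u
    constructor
    · intro hu
      have hu' : ∀ x ∈ g.ker, u x = 0 := fun x hx =>
        LinearMap.congr_fun (congrArg Subtype.val hu : r u = 0) ⟨x, hx⟩
      obtain ⟨σ, hσ⟩ := hg.hasRightInverse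
      have key : ∀ x y, g x = g y → u x = u y := fun x y hxy => by
        rw [← sub_eq_zero, ← map_sub]; apply hu'; simp [hxy]
      refine ⟨⟨⟨fun m => u (σ m), fun x y => ?_⟩, fun a x => ?_⟩, ?_⟩
      · rw [← map_add]; apply key; simp [hσ _]
      · simp only [RingHom.id_apply]; rw [← map_smul]; apply key; simp [hσ _]
      · refine LinearMap.ext fun x => key _ _ (hσ _)
    · rintro ⟨v, rfl⟩
      ext x
      change v (g x) = 0
      rw [x.2, map_zero]
  have e3 : Function.Surjective (r.rangeRestrict.restrictScalars R) := r.surjective_rangeRestrict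
  have f1 : Function.Injective (B.subtype.restrictScalars R) := B.injective_subtype
  have f2 : Function.Exact (B.subtype.restrictScalars R) (B.mkQ.restrictScalars R) := 
    LinearMap.exact_subtype_mkQ B
  have f3 : Function.Surjective (B.mkQ.restrictScalars R) := B.mkQ_surjective
  have hH : ∀ x ∈ IsLocalRing.maximalIdeal A, ∀ y : H, x • y = 0 := by
    intro x hx y
    obtain ⟨y, rfl⟩ := B.mkQ_surjective y
    obtain ⟨w, hw⟩ := hM.ker_ext g hg x hx
    rw [← map_smul, Submodule.mkQ_apply, Submodule.Quotient.mk_eq_zero]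
    refine ⟨y ∘ₗ w, ?_⟩
    refine LinearMap.ext fun m => ?_
    change y (w m) = x • y m
    rw [hw, map_smul]
  have hH1 : EV A M A 1 ↔ Subsingleton H := by
    rw [Submodule.Quotient.subsingleton_iff, LinearMap.range_eq_top]
    constructor
    · intro h u
      obtain ⟨v, hv⟩ := EV.extend (A := g.ker) g.ker.subtype g g.ker.injective_subtype hex hg h u
      exact ⟨v, hv⟩
    · intro h
      refine EV.one_of_extend (A := g.ker) g.ker.subtype g g.ker.injective_subtype hex hg
        (EV.proj 0) h
  have hfin : Module.Finite A (Module.Dual A g.ker) := inferInstance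
  refine ⟨g.ker, inferInstance, inferInstance, inferInstance, hM.ker g hg, fun i => ⟨?_, ?_⟩,
    EV R B N, EV R H N, ?_, ?_, ?_, ?_, ?_, ?_, ?_⟩
  · exact fun h => EV.left (A := g.ker) g.ker.subtype g g.ker.injective_subtype hex hg (EV.proj _) h
  · exact fun h => EV.right (A := g.ker) g.ker.subtype g g.ker.injective_subtype hex hg
      (EV.proj _) h
  · exact fun j h => EV.left _ _ e1 e2 e3 (EV.flat hN _ _) h
  · exact fun j h => EV.right _ _ e1 e2 e3 (EV.flat hN _ _) h
  · exact fun j h h' => EV.left _ _ f1 f2 f3 h h'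
  · exact fun j h h' => EV.right _ _ f1 f2 f3 h' h
  · intro h j h'
    have := hH1.1 h
    exact EV.mid _ _ f1 f2 f3 h' (EV.of_subsingleton j)
  · exact fun j h => EV.of_killed h H hH
  · intro h j h'
    rw [hH1, not_subsingleton_iff_nontrivial] at h
    exact EV.residue_of_killed H h' hH

section
variable {R A N : Type} [CommRing R] [CommRing A] [IsLocalRing A] [IsNoetherianRing A]
    [Algebra R A] [Module.Flat R A] [AddCommGroup N] [Module R N] (hN : PureInjective R N)
    {n s : ℕ} (hn : ∀ (M : Type) [AddCommGroup M] [Module R M] (j : ℕ), n < j → EV R M N j)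
    (hs : ∀ j, s < j → EV R (IsLocalRing.ResidueField A) N j)

include hN hn hs

lemma my_c1 (t : ℕ) : ∀ (j : ℕ) (M : Type) [AddCommGroup M] [Module A M] [Module.Finite A M],
    QF A M → n < j + t → s < j + 3 → EV R (Module.Dual A M) N (j+1) := by
  induction t with
  | zero => intro j M _ _ _ _ h1 h2; exact hn _ _ (by omega)
  | succ t ih =>
    intro j M _ _ _ hM h1 h2
    obtain ⟨K, _, _, _, hK, -, b, h, ha, -, hc, -, -, hg, -⟩ := my_syz hN M hM
    exact ha j (hc _ (ih (j+1) K hK (by omega) (by omega)) (hg _ (hs _ (by omega))))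

lemma my_c2 (d : ℕ) : ∀ (a : ℕ) (M : Type) [AddCommGroup M] [Module A M] [Module.Finite A M],
    QF A M → (∀ i < d, EV A M A (i+1)) → ¬ EV A M A (d+1) →
    (∀ j, a ≤ j → EV R (Module.Dual A M) N j) → a + d + 2 ≤ s →
    EV R (IsLocalRing.ResidueField A) N s := by
  induction d with
  | zero =>
    intro a M _ _ _ hM h1 h2 h3 h4
    obtain ⟨K, _, _, _, hK, -, b, h, -, hb, -, hd, -, -, hg⟩ := my_syz hN M hM
    obtain ⟨s, rfl⟩ : ∃ s', s = s' + 1 + 1 := ⟨s - 2, by omega⟩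
    refine hg h2 _ (hd _ (hb _ (h3 _ (by omega))) ?_)
    exact my_c1 hN hn hs (n+1) _ K hK (by omega) (by omega)
  | succ d ih =>
    intro a M _ _ _ hM h1 h2 h3 h4
    obtain ⟨K, _, _, _, hK, hKE, b, h, -, hb, -, -, he, -, -⟩ := my_syz hN M hM
    refine ih (a+1) K hK (fun i hi => (hKE i).1 (h1 (i+1) (by omega)))
      (fun hh => h2 ((hKE d).2 hh)) ?_ (by omega)
    intro j hj
    obtain ⟨j, rfl⟩ : ∃ j', j = j' + 1 := ⟨j - 1, by omega⟩
    exact he (h1 0 (by omega)) _ (hb _ (h3 _ (by omega)))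

lemma my_c3 (d : ℕ) (h1 : ∀ i < d, EV A (IsLocalRing.ResidueField A) A i)
    (h2 : ¬ EV A (IsLocalRing.ResidueField A) A d) (hsd : d < s) :
    EV R (IsLocalRing.ResidueField A) N s := by
  have hfin : Module.Finite A (IsLocalRing.ResidueField A) :=
    Module.Finite.of_surjective (Algebra.linearMap A (IsLocalRing.ResidueField A))
      IsLocalRing.residue_surjective
  cases d with
  | zero =>
    rw [EV.zero_iff, not_subsingleton_iff_nontrivial] at h2
    refine EV.residue_of_killed (Module.Dual A (IsLocalRing.ResidueField A)) ?_ ?_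
    · obtain ⟨s, rfl⟩ : ∃ s', s = s' + 1 := ⟨s - 1, by omega⟩
      exact my_c1 hN hn hs (n+1) _ _ QF.residue (by omega) (by omega)
    · intro x hx y
      refine LinearMap.ext fun m => ?_
      change x • y m = 0
      rw [← map_smul]
      have : x • m = 0 := by
        rw [Algebra.smul_def, IsLocalRing.ResidueField.algebraMap_eq,
          (IsLocalRing.residue_eq_zero_iff x).2 hx, zero_mul]
      rw [this, map_zero]
  | succ d =>
    have := EV.zero_iff.1 (h1 0 (by omega))
    have : Subsingleton (Module.Dual A (IsLocalRing.ResidueField A)) := this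
    exact my_c2 hN hn hs d 0 _ QF.residue (fun i hi => h1 _ (by omega)) h2
      (fun j _ => EV.of_subsingleton j) (by omega)
end

lemma my_main {R A N : Type} [CommRing R] [CommRing A] [IsLocalRing A] [IsNoetherianRing A]
    [Algebra R A] [Module.Flat R A] [AddCommGroup N] [Module R N] (hN : PureInjective R N)
    {n : ℕ} (hn : ∀ (M : Type) [AddCommGroup M] [Module R M] (j : ℕ), n < j → EV R M N j)
    (d : ℕ) (h1 : ∀ i < d, EV A (IsLocalRing.ResidueField A) A i)
    (h2 : ¬ EV A (IsLocalRing.ResidueField A) A d) (s : ℕ) (hsd : d < s) :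
    EV R (IsLocalRing.ResidueField A) N s := by
  have : ∀ t s, d < s → n < s + t → EV R (IsLocalRing.ResidueField A) N s := by
    intro t
    induction t with
    | zero => intro s _ h; exact hn _ _ h
    | succ t ih =>
      intro s hs h
      exact my_c3 hN hn (fun j hj => ih j (by omega) (by omega)) d h1 h2 hs
  exact this (n+1) s hsd (by omega)

lemma my_resField (R : Type) [CommRing R] (p : PrimeSpectrum R) :
    Nonempty (resField R p ≃ₗ[R]
      IsLocalRing.ResidueField (Localization.AtPrime p.asIdeal)) := by
  let f : (R ⧸ p.asIdeal) →ₗ[R] p.asIdeal.ResidueField :=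
    (IsScalarTower.toAlgHom R (R ⧸ p.asIdeal) p.asIdeal.ResidueField).toLinearMap
  have hf : Function.Injective f := IsFractionRing.injective (R ⧸ p.asIdeal) p.asIdeal.ResidueField
  have hu : ∀ x ∈ p.asIdeal.primeCompl, algebraMap R p.asIdeal.ResidueField x ≠ 0 := by
    intro x hx h
    exact hx (Ideal.algebraMap_residueField_eq_zero.1 h)
  have : IsLocalizedModule p.asIdeal.primeCompl f := by
    refine ⟨fun x => ?_, fun y => ?_, fun {x y} h => ⟨1, by rw [hf h]⟩⟩
    · rw [Module.End.isUnit_iff]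
      constructor
      · intro a b h
        simp only [Module.algebraMap_end_apply, Algebra.smul_def] at h
        exact mul_left_cancel₀ (hu x x.2) h
      · intro b
        refine ⟨(algebraMap R p.asIdeal.ResidueField x)⁻¹ * b, ?_⟩
        simp only [Module.algebraMap_end_apply, Algebra.smul_def]
        exact mul_inv_cancel_left₀ (hu x x.2) b
    · obtain ⟨a, b, hb, rfl⟩ := IsFractionRing.div_surjective (A := R ⧸ p.asIdeal) y
      obtain ⟨b, rfl⟩ := Ideal.Quotient.mk_surjective b
      have hb' : b ∈ p.asIdeal.primeCompl := fun h =>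
        nonZeroDivisors.ne_zero hb (Ideal.Quotient.eq_zero_iff_mem.2 h)
      refine ⟨(a, ⟨b, hb'⟩), ?_⟩
      have h3 : algebraMap (R ⧸ p.asIdeal) p.asIdeal.ResidueField (Ideal.Quotient.mk p.asIdeal b)
        = algebraMap R p.asIdeal.ResidueField b := rfl
      rw [h3]
      change (b : R) • _ = algebraMap (R ⧸ p.asIdeal) p.asIdeal.ResidueField a
      rw [Algebra.smul_def]
      exact mul_div_cancel₀ _ (hu b hb')
  exact ⟨IsLocalizedModule.iso p.asIdeal.primeCompl f⟩

lemma my_shift (R : Type) [CommRing R] (𝒞 𝒲 Pcl : Set (ModuleCat.{0} R))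
    (hpair : IsHereditaryCotorsionPair R 𝒞 𝒲) (hcogen : 𝒞 = leftPerp1 R Pcl) (d : ℕ) :
    ∀ (M : Type) [AddCommGroup M] [Module R M], (∀ X ∈ Pcl, EV R M X (d+1)) →
    ∀ Y ∈ 𝒲, ∀ j, d < j → EV R M Y j := by
  induction d with
  | zero =>
    intro M _ _ h Y hY j hj
    have hM : ModuleCat.of R M ∈ 𝒞 := by
      rw [hcogen]; exact fun X hX => (my_extV_iff _ _ _ _).2 (h X hX)
    exact (my_extV_iff _ _ _ _).1 (hpair.2 _ hM Y hY j hj)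
  | succ d ih =>
    intro M _ _ h Y hY j hj
    let g := Finsupp.linearCombination R (id : M → M)
    have hg : Function.Surjective g := Finsupp.linearCombination_id_surjective R M
    obtain ⟨j, rfl⟩ : ∃ j', j = j' + 1 := ⟨j - 1, by omega⟩
    refine EV.right (A := g.ker) g.ker.subtype g g.ker.injective_subtype
      (LinearMap.exact_subtype_ker_map g) hg (EV.proj _) (ih g.ker (fun X hX => ?_) Y hY j (by omega))
    exact EV.left (A := g.ker) g.ker.subtype g g.ker.injective_subtype
      (LinearMap.exact_subtype_ker_map g) hg (EV.proj _) (h X hX)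

/-- let `(𝒞, 𝒲)` be a hereditary cotorsion pair over a commutative
noetherian ring cogenerated by a class of pure-injective modules of finite injective
dimension, and let `φ(p) = inf {i ∣ k(p) ∈ 𝒞_(i)}`. Then `φ(p) ≤ depth(R_p)` for
every prime `p`. -/
theorem stmt14 (R : Type) [CommRing R] [IsNoetherianRing R]
    (𝒞 𝒲 Pcl : Set (ModuleCat.{0} R))
    (hpair : IsHereditaryCotorsionPair R 𝒞 𝒲)
    (hP : Pcl ⊆ PIFinInj R)
    (hcogen : 𝒞 = leftPerp1 R Pcl) :
    ∀ p : PrimeSpectrum R,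
      sInf {n : ℕ∞ | ∃ i : ℕ, n = (i : ℕ∞) ∧
        ModuleCat.of R (resField R p) ∈ cotShift R 𝒲 i} ≤ ringDepthAt R p := by
  intro p
  by_cases hne : ∃ i : ℕ, ¬ extV (Localization.AtPrime p.asIdeal)
    (ModuleCat.of _ (IsLocalRing.ResidueField (Localization.AtPrime p.asIdeal)))
    (ModuleCat.of _ (Localization.AtPrime p.asIdeal)) i
  · classical
    let d := Nat.find hne
    have hd : ¬ EV (Localization.AtPrime p.asIdeal)
        (IsLocalRing.ResidueField (Localization.AtPrime p.asIdeal))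
        (Localization.AtPrime p.asIdeal) d := by
      have := Nat.find_spec hne
      rwa [my_extV_iff] at this
    have hd' : ∀ i < d, EV (Localization.AtPrime p.asIdeal)
        (IsLocalRing.ResidueField (Localization.AtPrime p.asIdeal))
        (Localization.AtPrime p.asIdeal) i := by
      intro i hi
      have := Nat.find_min hne hi
      rwa [not_not, my_extV_iff] at this
    have hle : (d : ℕ∞) ≤ ringDepthAt R p := by
      refine le_sInf ?_
      rintro _ ⟨i, rfl, hi⟩
      exact_mod_cast Nat.find_min' hne hi
    refine le_trans (sInf_le ⟨d, rfl, ?_⟩) hle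
    intro Y hY j hj
    rw [my_extV_iff]
    refine my_shift R 𝒞 𝒲 Pcl hpair hcogen d (resField R p) (fun X hX => ?_) Y hY j hj
    obtain ⟨hX1, n, hX2⟩ := hP hX
    obtain ⟨e⟩ := my_resField R p
    have : Module.Flat R (Localization.AtPrime p.asIdeal) :=
      IsLocalization.flat _ p.asIdeal.primeCompl
    refine EV.retract e.toLinearMap e.symm.toLinearMap (by ext; simp)
      (my_main hX1 (n := n) ?_ d hd' hd (d+1) (by omega))
    intro M _ _ j hj
    exact (my_extV_iff _ _ _ _).1 (hX2 _ j hj)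
  · have : ringDepthAt R p = ⊤ := by
      unfold ringDepthAt rdepth
      rw [sInf_eq_top]
      rintro _ ⟨i, -, hi⟩
      exact absurd ⟨i, hi⟩ hne
    rw [this]
    exact le_top
end
end
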